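/- arXiv:1902.10881 — 3 statements merged into one kernel-verified Lean document; each statement's English description precedes it below -/
import Mathlib

section
/- A connected graph G on at least 3 vertices satisfies vcfc(G) = 2 if and only if G is 2-connected or G has exactly one cut-vertex. -/
/-!
With two colors, a path is conflict-free when one of its vertices shares its color with no other
vertex of the path.

If at most one vertex is a cut-vertex, choose `x` so that all other vertices are not, and give `x`
a color of its own. Any two vertices `u ≠ v` are joined by a path through `x`: a fan, that is, a
pair of paths from `x` to `u` and to `v` meeting only in `x`, can be pushed along the edges of a
walk from `x` to `u` that avoids `v`. The only obstacle is that the next vertex `y` lies on the path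
to `v`; this gives two paths from `x` to `y` meeting only in their ends. A walk from `v` to `x`
avoiding `y` first meets one of them, along which it is continued to `x`, while the other serves as
the path to `y`.

Conversely, let `x ≠ y` be cut-vertices of a graph with a conflict-free 2-coloring. A part cut off
by `x` cannot be colored like `x` throughout, or its paths to `x` would be monochromatic. So there
are a vertex `u` separated from `y` by `x` and a vertex `v` separated from `x` by `y`, whose colors
differ from those of `x` and `y` respectively. Every path from `u` to `v` contains `x` and `y`, so
each color occurs in both of the disjoint pairs `{u, x}` and `{v, y}`.
-/

open SimpleGraph

/-- A vertex coloring makes `G` conflict-free vertex-connected if every pair of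
distinct vertices is joined by a path on which some color appears on exactly one vertex. -/
def IsCFVertexConnColoring {V : Type*} (G : SimpleGraph V) (c : V → ℕ) : Prop :=
  ∀ u v : V, u ≠ v → ∃ p : G.Walk u v, p.IsPath ∧
    ∃ col : ℕ, (p.support.filter (fun x => c x = col)).length = 1

/-- The conflict-free vertex-connection number of `G`. -/
noncomputable def vcfConn {V : Type*} (G : SimpleGraph V) : ℕ :=
  sInf {k | ∃ c : V → ℕ, (∀ v, c v < k) ∧ IsCFVertexConnColoring G c}

/-- `v` is a cut-vertex: deleting it disconnects the graph. -/
def IsCutVertex {V : Type*} (G : SimpleGraph V) (v : V) : Prop :=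
  ¬ (G.induce {u | u ≠ v}).Connected

/-- `G` is 2-connected: it is connected and deleting any single vertex
leaves it connected. -/
def TwoConnected {V : Type*} (G : SimpleGraph V) : Prop :=
  G.Connected ∧ ∀ v : V, (G.induce {u | u ≠ v}).Connected

section Separation

variable {V : Type*} {G : SimpleGraph V} {a b c x y : V}

theorem reachable_induce_iff_exists_walk {s : Set V} {a b : s} :
    (G.induce s).Reachable a b ↔ ∃ p : G.Walk a b, ∀ z ∈ p.support, z ∈ s := by
  constructor
  · rintro ⟨p⟩
    refine ⟨p.map (Embedding.induce s).toHom, fun z hz => ?_⟩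
    obtain ⟨w, -, rfl⟩ := List.mem_map.1 (p.support_map _ ▸ hz)
    exact w.2
  · rintro ⟨p, hp⟩
    exact ⟨p.induce s hp⟩

/-- The vertex `x` separates `a` from `b`: it lies on every walk between them. The cases `x = a`
and `x = b` are allowed, so that `¬ Separates G x` is the relation of being connected in `G - x`. -/
def Separates (G : SimpleGraph V) (x a b : V) : Prop :=
  ∀ p : G.Walk a b, x ∈ p.support

theorem not_separates_iff : ¬Separates G x a b ↔ ∃ p : G.Walk a b, x ∉ p.support :=
  not_forall

theorem Separates.symm (h : Separates G x a b) : Separates G x b a := fun p => by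
  simpa using h p.reverse

theorem Separates.of_not_separates (hac : Separates G x a c) (hbc : ¬Separates G x b c) :
    Separates G x a b := by
  obtain ⟨q, hq⟩ := not_separates_iff.1 hbc
  exact fun p => ((Walk.mem_support_append_iff p q).1 (hac (p.append q))).resolve_right hq

theorem not_separates_of_isPath_of_mem_support {p : G.Walk a x} (hp : p.IsPath)
    (hb : b ∈ p.support) (hbx : b ≠ x) : ¬Separates G x a b := by
  classical
  exact fun h => Walk.endpoint_notMem_support_takeUntil hp hb hbx.symm (h (p.takeUntil b hb))

theorem Separates.not_separates_swap (hconn : G.Connected) (hxy : x ≠ y)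
    (h : Separates G x a y) : ¬Separates G y a x := by
  obtain ⟨p, hp⟩ := hconn.exists_isPath a y
  exact not_separates_of_isPath_of_mem_support hp (h p) hxy

theorem isCutVertex_iff_exists_separates (hb : b ≠ x) :
    IsCutVertex G x ↔ ∃ a, a ≠ x ∧ Separates G x a b := by
  have walk_iff {a : V} (ha : a ≠ x) :
      (G.induce {u | u ≠ x}).Reachable ⟨a, ha⟩ ⟨b, hb⟩ ↔ ¬Separates G x a b := by
    simp only [reachable_induce_iff_exists_walk, not_separates_iff]
    exact exists_congr fun p => List.forall_mem_ne'
  constructor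
  · contrapose!
    intro h
    refine not_not.2 ((connected_iff_exists_forall_reachable _).2 ⟨⟨b, hb⟩, ?_⟩)
    exact fun ⟨a, ha⟩ => ((walk_iff ha).2 (h a ha)).symm
  · rintro ⟨a, ha, hab⟩ hconn
    exact (walk_iff ha).1 (hconn.preconnected _ _) hab

theorem not_separates_of_not_isCutVertex (hx : ¬IsCutVertex G x) (ha : a ≠ x) (hb : b ≠ x) :
    ¬Separates G x a b :=
  fun h => hx ((isCutVertex_iff_exists_separates hb).2 ⟨a, ha, h⟩)

theorem twoConnected_iff_forall_not_isCutVertex (hconn : G.Connected) :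
    TwoConnected G ↔ ∀ x, ¬IsCutVertex G x := by
  simp only [TwoConnected, IsCutVertex, hconn, true_and, not_not]

end Separation

section Fan

variable {V : Type*} {G : SimpleGraph V} {u v x y : V}

/-- There is a fan from `x` to `u` and `v`: a pair of paths from `x` to `u` and from `x` to `v`
that meet only in `x`. -/
def HasFan (G : SimpleGraph V) (x u v : V) : Prop :=
  ∃ (p : G.Walk x u) (q : G.Walk x v), p.IsPath ∧ q.IsPath ∧
    ∀ z ∈ p.support, z ∈ q.support → z = x

theorem HasFan.of_walks (p : G.Walk x u) (q : G.Walk x v)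
    (h : ∀ z ∈ p.support, z ∈ q.support → z = x) : HasFan G x u v := by
  classical
  exact ⟨p.bypass, q.bypass, p.bypass_isPath, q.bypass_isPath, fun z hp hq =>
    h z (p.support_bypass_subset_support hp) (q.support_bypass_subset_support hq)⟩

theorem HasFan.symm (h : HasFan G x u v) : HasFan G x v u := by
  obtain ⟨p, q, hp, hq, h⟩ := h
  exact ⟨q, p, hq, hp, fun z hzq hzp => h z hzp hzq⟩

theorem hasFan_self_left (h : G.Reachable x v) : HasFan G x x v :=
  .of_walks .nil h.some fun _ hz _ => List.mem_singleton.1 hz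

theorem HasFan.exists_isPath_mem_support (h : HasFan G x u v) :
    ∃ p : G.Walk u v, p.IsPath ∧ x ∈ p.support := by
  obtain ⟨p, q, hp, hq, h⟩ := h
  have x_notMem : x ∉ q.support.tail :=
    (List.nodup_cons.1 (q.cons_tail_support ▸ hq.support_nodup)).1
  refine ⟨p.reverse.append q, ?_, by simp⟩
  rw [Walk.isPath_def, Walk.support_append, List.nodup_append']
  refine ⟨hp.reverse.support_nodup, hq.support_nodup.tail, fun z hzp hzq => ?_⟩
  obtain rfl : z = x := h z (by simpa using hzp) (List.mem_of_mem_tail hzq)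
  exact x_notMem hzq

theorem HasFan.of_internally_disjoint {p q : G.Walk x y} (hp : p.IsPath) (hq : q.IsPath)
    (h : ∀ z ∈ p.support, z ∈ q.support → z = x ∨ z = y) (hv : ¬Separates G y v x) :
    HasFan G x y v := by
  classical
  obtain ⟨w, hyw⟩ := not_separates_iff.1 hv
  obtain ⟨a, ha, haw, first_hit⟩ := w.exists_mem_support_forall_mem_support_imp_eq
    (p.support.toFinset ∪ q.support.toFinset) ⟨x, by simp⟩
  simp only [Finset.mem_union, List.mem_toFinset] at ha first_hit
  wlog hap : a ∈ p.support generalizing p q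
  · exact this hq hp (fun z hzq hzp => h z hzp hzq) ha.symm
      (fun z hz => first_hit z hz.symm) (ha.resolve_left hap)
  have hya : y ≠ a := (ne_of_mem_of_not_mem haw hyw).symm
  refine .of_walks q ((p.takeUntil a hap).append (w.takeUntil a haw).reverse) fun z hzq hz => ?_
  rw [Walk.mem_support_append_iff, Walk.support_reverse, List.mem_reverse] at hz
  have z_ne : z ≠ y := by
    rintro rfl
    exact hz.elim (Walk.endpoint_notMem_support_takeUntil hp hap hya)
      fun hz => hyw (w.support_takeUntil_subset_support haw hz)
  have z_mem : z ∈ p.support := by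
    rcases hz with hz | hz
    · exact p.support_takeUntil_subset_support hap hz
    · rwa [first_hit z (.inr hzq) hz]
  exact (h z z_mem hzq).resolve_right z_ne

theorem HasFan.of_adj (h : HasFan G x u v) (huy : G.Adj u y) (hv : ¬Separates G y v x) :
    HasFan G x y v := by
  classical
  obtain ⟨p, q, hp, hq, h⟩ := h
  by_cases hyp : y ∈ p.support
  · exact ⟨p.takeUntil y hyp, q, hp.takeUntil hyp, hq, fun z hz =>
      h z (p.support_takeUntil_subset_support hyp hz)⟩
  have meet (z : V) (hzp : z ∈ (p.concat huy).support) (hzq : z ∈ q.support) : z = x ∨ z = y := by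
    rw [Walk.support_concat, List.mem_append, List.mem_singleton] at hzp
    exact hzp.imp_left fun hzp => h z hzp hzq
  by_cases hyq : y ∈ q.support
  · exact .of_internally_disjoint (hp.concat hyp huy) (hq.takeUntil hyq)
      (fun z hzp hzq => meet z hzp (q.support_takeUntil_subset_support hyq hzq)) hv
  · exact ⟨p.concat huy, q, hp.concat hyp huy, hq, fun z hzp hzq =>
      (meet z hzp hzq).resolve_right (ne_of_mem_of_not_mem hzq hyq)⟩

theorem HasFan.of_forall_not_isCutVertex (hconn : G.Connected)
    (hcut : ∀ w, w ≠ x → ¬IsCutVertex G w) (huv : u ≠ v) : HasFan G x u v := by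
  rcases eq_or_ne v x with rfl | hvx
  · exact (hasFan_self_left (hconn v u)).symm
  obtain ⟨w, hvw⟩ := not_separates_iff.1
    (not_separates_of_not_isCutVertex (hcut v hvx) huv hvx.symm)
  clear huv
  induction w with
  | nil => exact hasFan_self_left (hconn _ v)
  | @cons u u' x huu' w ih =>
    rw [Walk.support_cons, List.mem_cons, not_or] at hvw
    rcases eq_or_ne u x with rfl | hux
    · exact hasFan_self_left (hconn u v)
    · exact (ih hcut hvx hvw.2).of_adj huu'.symm
        (not_separates_of_not_isCutVertex (hcut u hux) hvw.1 hux.symm)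

end Fan

theorem length_eq_one_iff_existsUnique_mem {α : Type*} {l : List α} (hl : l.Nodup) :
    l.length = 1 ↔ ∃! a, a ∈ l := by
  match l with
  | [] => simp
  | [a] => simp
  | a :: b :: l =>
    have hab : a ≠ b := fun h => (List.nodup_cons.1 hl).1 (h ▸ List.mem_cons_self)
    refine iff_of_false (by simp) fun unique => hab (unique.unique ?_ ?_) <;> simp

section Coloring

variable {V : Type*} {G : SimpleGraph V} {c : V → ℕ} {k : ℕ} {x y : V}

theorem isCFVertexConnColoring_iff :
    IsCFVertexConnColoring G c ↔ ∀ u v, u ≠ v → ∃ p : G.Walk u v, p.IsPath ∧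
      ∃ z ∈ p.support, ∀ w ∈ p.support, c w = c z → w = z := by
  refine forall₃_congr fun u v _ => exists_congr fun p => and_congr_right fun hp => ?_
  simp only [length_eq_one_iff_existsUnique_mem (hp.support_nodup.filter _), List.mem_filter,
    decide_eq_true_eq]
  constructor
  · rintro ⟨_, z, ⟨hz, rfl⟩, unique⟩
    exact ⟨z, hz, fun w hw hwz => unique w ⟨hw, hwz⟩⟩
  · rintro ⟨z, hz, unique⟩
    exact ⟨c z, z, ⟨hz, rfl⟩, fun w hw => unique w hw.1 hw.2⟩

theorem IsCutVertex.exists_separates_color_ne (hx : IsCutVertex G x)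
    (hc : IsCFVertexConnColoring G c) (hy : y ≠ x) : ∃ u, c u ≠ c x ∧ Separates G x u y := by
  obtain ⟨a, hax, ha⟩ := (isCutVertex_iff_exists_separates hy).1 hx
  obtain ⟨p, hp, z, hz, unique⟩ := isCFVertexConnColoring_iff.1 hc a x hax
  by_contra! h
  have monochromatic (w : V) (hw : w ∈ p.support) : c w = c x := by
    by_contra hwx
    have not_separated : ¬Separates G x a w :=
      not_separates_of_isPath_of_mem_support hp hw (ne_of_apply_ne c hwx)
    exact h w hwx (ha.symm.of_not_separates (mt Separates.symm not_separated)).symm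
  have eq_z (w : V) (hw : w ∈ p.support) : w = z :=
    unique w hw ((monochromatic w hw).trans (monochromatic z hz).symm)
  exact hax ((eq_z a p.start_mem_support).trans (eq_z x p.end_mem_support).symm)

theorem IsCutVertex.eq_of_isCFVertexConnColoring (hconn : G.Connected)
    (hc : IsCFVertexConnColoring G c) (hc₂ : ∀ v, c v < 2) (hx : IsCutVertex G x)
    (hy : IsCutVertex G y) : x = y := by
  by_contra hxy
  obtain ⟨u, hcu, hu⟩ := hx.exists_separates_color_ne hc (Ne.symm hxy)
  obtain ⟨v, hcv, hv⟩ := hy.exists_separates_color_ne hc hxy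
  have hux : ¬Separates G y u x := hu.not_separates_swap hconn hxy
  have hvy : ¬Separates G x v y := hv.not_separates_swap hconn (Ne.symm hxy)
  have x_separates : Separates G x u v := hu.of_not_separates hvy
  have y_separates : Separates G y u v := (hv.of_not_separates hux).symm
  have huy : u ≠ y := fun h => hux fun p => h ▸ p.start_mem_support
  have hvx : v ≠ x := fun h => hvy fun p => h ▸ p.start_mem_support
  have huv : u ≠ v := fun h => hvy (h ▸ hu)
  obtain ⟨p, -, z, -, unique⟩ := isCFVertexConnColoring_iff.1 hc u v huv
  have eq_or_eq {s t : V} (hs : s ∈ p.support) (ht : t ∈ p.support) (hst : c s ≠ c t) :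
      s = z ∨ t = z := by
    have color_eq : c s = c z ∨ c t = c z := by
      have := hc₂ s; have := hc₂ t; have := hc₂ z
      omega
    exact color_eq.imp (unique s hs) (unique t ht)
  have eq_u_or_x : u = z ∨ x = z := eq_or_eq p.start_mem_support (x_separates p) hcu
  have eq_v_or_y : v = z ∨ y = z := eq_or_eq p.end_mem_support (y_separates p) hcv
  grind

/-- `G` has a conflict-free vertex-connection coloring with colors `0, …, k - 1`, so that
`vcfConn G` is the least such `k` whenever there is one. -/
def CFVertexConnColorable (G : SimpleGraph V) (k : ℕ) : Prop :=
  ∃ c : V → ℕ, (∀ v, c v < k) ∧ IsCFVertexConnColoring G c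

theorem CFVertexConnColorable.mono {m n : ℕ} (hmn : m ≤ n) :
    CFVertexConnColorable G m → CFVertexConnColorable G n
  | ⟨c, hcm, hc⟩ => ⟨c, fun v => (hcm v).trans_le hmn, hc⟩

theorem not_cfVertexConnColorable_one [Nontrivial V] : ¬CFVertexConnColorable G 1 := by
  rintro ⟨c, hc₁, hc⟩
  obtain ⟨u, v, huv⟩ := exists_pair_ne V
  obtain ⟨p, -, z, -, unique⟩ := isCFVertexConnColoring_iff.1 hc u v huv
  have color_eq (w : V) : c w = c z := by
    rw [Nat.lt_one_iff.1 (hc₁ w), Nat.lt_one_iff.1 (hc₁ z)]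
  exact huv ((unique u p.start_mem_support (color_eq u)).trans
    (unique v p.end_mem_support (color_eq v)).symm)

theorem cfVertexConnColorable_two_of_forall_not_isCutVertex (hconn : G.Connected)
    (hcut : ∀ w, w ≠ x → ¬IsCutVertex G w) : CFVertexConnColorable G 2 := by
  classical
  refine ⟨fun v => if v = x then 1 else 0, fun v => by grind, ?_⟩
  rw [isCFVertexConnColoring_iff]
  intro u v huv
  obtain ⟨p, hp, hx⟩ :=
    (HasFan.of_forall_not_isCutVertex hconn hcut huv).exists_isPath_mem_support
  exact ⟨p, hp, x, hx, fun w _ hw => by simpa using hw⟩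

theorem cfVertexConnColorable_two_iff (hconn : G.Connected) :
    CFVertexConnColorable G 2 ↔ {x | IsCutVertex G x}.Subsingleton := by
  constructor
  · rintro ⟨c, hc₂, hc⟩ x hx y hy
    exact hx.eq_of_isCFVertexConnColoring hconn hc hc₂ hy
  · intro h
    obtain ⟨x, hx⟩ : ∃ x, ∀ w, w ≠ x → ¬IsCutVertex G w := by
      by_cases hne : ∃ x, IsCutVertex G x
      · exact hne.imp fun x hx w hwx hw => hwx (h hw hx)
      · exact hconn.nonempty.elim fun x => ⟨x, fun w _ hw => hne ⟨w, hw⟩⟩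
    exact cfVertexConnColorable_two_of_forall_not_isCutVertex hconn hx

theorem vcfConn_eq_succ_iff :
    vcfConn G = k + 1 ↔ CFVertexConnColorable G (k + 1) ∧ ¬CFVertexConnColorable G k :=
  Nat.sInf_upward_closed_eq_succ_iff (fun _ _ hmn => CFVertexConnColorable.mono hmn) k

end Coloring

theorem vcfConn_eq_two_iff_general {V : Type*} [Nontrivial V] (G : SimpleGraph V)
    (hconn : G.Connected) :
    vcfConn G = 2 ↔ TwoConnected G ∨ (∃! x : V, IsCutVertex G x) := by
  rw [vcfConn_eq_succ_iff, and_iff_left not_cfVertexConnColorable_one,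
    cfVertexConnColorable_two_iff hconn, Set.subsingleton_iff_eq_empty_or_singleton,
    twoConnected_iff_forall_not_isCutVertex hconn, Set.eq_empty_iff_forall_notMem,
    Set.singleton_iff_unique_mem]
  rfl

/-- A connected graph `G` on at least `3` vertices satisfies `vcfc(G) = 2` if and
only if `G` is 2-connected or `G` has exactly one cut-vertex. -/
theorem vcfConn_eq_two_iff {V : Type*} [Fintype V] (G : SimpleGraph V)
    (hcard : 3 ≤ Fintype.card V) (hconn : G.Connected) :
    vcfConn G = 2 ↔ TwoConnected G ∨ (∃! x : V, IsCutVertex G x) := by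
  have : Nontrivial V := Fintype.one_lt_card_iff_nontrivial.1 (by lia)
  exact vcfConn_eq_two_iff_general G hconn
end

section
/- For a connected graph G of diameter 3 with h(G) ≥ 3, cfc(G) = h(G). -/
open SimpleGraph

/-- An edge coloring makes `G` conflict-free connected if every pair of distinct
vertices is joined by a path on which some color appears on exactly one edge. -/
def IsCFConnColoring {V : Type*} (G : SimpleGraph V) (c : Sym2 V → ℕ) : Prop :=
  ∀ u v : V, u ≠ v → ∃ p : G.Walk u v, p.IsPath ∧
    ∃ col : ℕ, (p.edges.filter (fun e => c e = col)).length = 1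

/-- The conflict-free connection number of `G`. -/
noncomputable def cfConn {V : Type*} (G : SimpleGraph V) : ℕ :=
  sInf {k | ∃ c : Sym2 V → ℕ, (∀ e ∈ G.edgeSet, c e < k) ∧ IsCFConnColoring G c}

/-- The subgraph `C(G)` of `G` induced by the set of cut-edges (bridges). -/
def bridgeGraph {V : Type*} (G : SimpleGraph V) : SimpleGraph V :=
  SimpleGraph.fromEdgeSet {e | G.IsBridge e}

/-- `h(G)`: the maximum of `cfConn` over the components of the forest of cut-edges
of `G` (it equals `0` if `G` has no cut-edge). -/
noncomputable def hG {V : Type*} (G : SimpleGraph V) : ℕ :=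
  sSup {n | ∃ comp : (bridgeGraph G).ConnectedComponent,
    n = cfConn ((bridgeGraph G).induce comp.supp)}

/-!
A path of bridges is the only path between its ends, so a coloring that makes `G` conflict-free
connected does the same for each component of the forest of cut-edges, whence `h(G) ≤ cfc(G)`.

Conversely, a coloring of a tree that is conflict-free connected is proper, because adjacent edges
form the only path between their far ends. So gluing optimal colorings of the components gives a
coloring `b` of the bridges with colors `0, …, h(G) - 1` that is proper and has a unique color on
every path of bridges.

Fix a spanning tree `T`, and color the remaining edges `0` if they are in `T` and `1` otherwise.
Let `p` be the path of `T` between two vertices, and suppose that it has an edge `g` which is not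
a bridge. If `p` has exactly one bridge of color `1`, that edge is unique on `p`; if it has none,
rerouting `p` around `g` through a single edge outside `T` makes `1` unique. If it has two, they
are disjoint and lie on every path between the ends of `p`; as the diameter is at most `3`, the
ends are joined by a path `x, u, v, y` with `xu` and `vy` bridges of color `1` and `uv` not a
bridge. The diameter bound forces `x` and `y` to be leaves, and the inner vertices of all such
paths (the hubs) to be pairwise adjacent. Let `T` contain all edges at one hub `u₁`, and give the
edge from `u₁` to another hub `u₂` color `2`: then any two hubs are joined by a path through hubs
with a unique color other than `1`, which settles the remaining pairs.
-/

namespace CFConnection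

variable {V W : Type*} {G H T : SimpleGraph V} {b c : Sym2 V → ℕ} {k l : ℕ} {x y : V}

/-! ### Conflict-free paths and colorings -/

/-- Some edge of the walk `p` has a color under `c` that no other edge of `p` has. The condition is
about edges rather than positions, so it matches the count in `IsCFConnColoring` only if `p` has no
repeated edge. -/
def HasUniqueColor (c : Sym2 V → ℕ) (p : G.Walk x y) : Prop :=
  ∃ e ∈ p.edges, ∀ e' ∈ p.edges, c e' = c e → e' = e

/-- The vertices `x` and `y` are joined in `G` by a path that is conflict-free under `c`. -/
def CFJoined (G : SimpleGraph V) (c : Sym2 V → ℕ) (x y : V) : Prop :=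
  ∃ p : G.Walk x y, p.IsPath ∧ HasUniqueColor c p

lemma hasUniqueColor_iff_of_isPath {p : G.Walk x y} (hp : p.IsPath) :
    HasUniqueColor c p ↔ ∃ col, (p.edges.filter (fun e => c e = col)).length = 1 := by
  classical
  constructor
  · rintro ⟨e, he, huniq⟩
    have hfilter : p.edges.filter (fun e' => c e' = c e) = p.edges.filter (fun e' => e' = e) :=
      List.filter_congr fun e' he' => by
        simpa only [decide_eq_decide] using ⟨huniq e' he', fun h => h ▸ rfl⟩
    refine ⟨c e, ?_⟩
    rw [hfilter, ← List.countP_eq_length_filter]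
    exact List.count_eq_one_of_mem hp.isTrail.edges_nodup he
  · rintro ⟨col, hcol⟩
    obtain ⟨e, he⟩ := List.length_eq_one_iff.1 hcol
    have hmem (e' : Sym2 V) : e' ∈ p.edges ∧ c e' = col ↔ e' = e := by
      simpa using congrArg (e' ∈ ·) he
    obtain ⟨hep, hec⟩ := (hmem e).2 rfl
    exact ⟨e, hep, fun e' he' heq => (hmem e').1 ⟨he', heq.trans hec⟩⟩

lemma isCFConnColoring_iff_cfJoined :
    IsCFConnColoring G c ↔ ∀ x y, x ≠ y → CFJoined G c x y :=
  forall₃_congr fun _ _ _ => exists_congr fun _ =>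
    and_congr_right fun hp => (hasUniqueColor_iff_of_isPath hp).symm

lemma hasUniqueColor_map_iff {H : SimpleGraph W} {x y : W} {p : H.Walk x y} {f : H →g G}
    (hf : Function.Injective f) :
    HasUniqueColor c (p.map f) ↔ HasUniqueColor (c ∘ Sym2.map f) p := by
  simp [HasUniqueColor, Walk.edges_map, (Sym2.map.injective hf).eq_iff]

lemma HasUniqueColor.congr {p : G.Walk x y} (h : HasUniqueColor b p)
    (hbc : ∀ e ∈ p.edges, b e = c e) : HasUniqueColor c p := by
  obtain ⟨e, he, huniq⟩ := h
  exact ⟨e, he, fun e' he' heq => huniq e' he' (by rw [hbc e he, hbc e' he', heq])⟩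

lemma CFJoined.symm (h : CFJoined G c x y) : CFJoined G c y x := by
  obtain ⟨p, hp, huniq⟩ := h
  exact ⟨p.reverse, hp.reverse, by simpa [HasUniqueColor] using huniq⟩

lemma CFJoined.map {H : SimpleGraph W} {b : Sym2 W → ℕ} {x y : W} (h : CFJoined H b x y)
    (f : H →g G) (hf : Function.Injective f) (hbc : ∀ e ∈ H.edgeSet, b e = c (e.map f)) :
    CFJoined G c (f x) (f y) := by
  obtain ⟨p, hp, huniq⟩ := h
  exact ⟨p.map f, hp.map hf, (hasUniqueColor_map_iff hf).2 <|
    huniq.congr fun e he => hbc e (p.edges_subset_edgeSet he)⟩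

lemma isCFConnColoring_of_injective (hconn : G.Preconnected) (hc : Function.Injective c) :
    IsCFConnColoring G c := by
  refine isCFConnColoring_iff_cfJoined.2 fun x y hxy => ?_
  obtain ⟨p, hp⟩ := (hconn x y).exists_isPath
  obtain ⟨e, he⟩ := List.exists_mem_of_ne_nil p.edges
    (by simpa [Walk.edges_eq_nil] using Walk.not_nil_of_ne hxy)
  exact ⟨p, hp, e, he, fun e' _ heq => hc heq⟩

/-- The colors `0, …, k - 1` suffice to make `G` conflict-free connected, so that `cfConn G` is
the least such `k` if there is one. -/
def CFConnColorable (G : SimpleGraph V) (k : ℕ) : Prop :=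
  ∃ c : Sym2 V → ℕ, (∀ e ∈ G.edgeSet, c e < k) ∧ IsCFConnColoring G c

lemma CFConnColorable.mono (h : CFConnColorable G k) (hkl : k ≤ l) : CFConnColorable G l :=
  h.imp fun _ hc => ⟨fun e he => (hc.1 e he).trans_le hkl, hc.2⟩

lemma CFConnColorable.cfConn_le (h : CFConnColorable G k) : cfConn G ≤ k :=
  Nat.sInf_le h

lemma CFConnColorable.cfConnColorable_cfConn (h : CFConnColorable G k) :
    CFConnColorable G (cfConn G) :=
  Nat.sInf_mem (s := {k | CFConnColorable G k}) ⟨k, h⟩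

lemma exists_cfConnColorable [Finite V] (hconn : G.Preconnected) : ∃ k, CFConnColorable G k := by
  obtain ⟨k, ⟨f⟩⟩ := Finite.exists_equiv_fin (Sym2 V)
  exact ⟨k, fun e => f e, fun e _ => (f e).2,
    isCFConnColoring_of_injective hconn (Fin.val_injective.comp f.injective)⟩

/-- The coloring `b` restricts to a conflict-free connected coloring of every component of `H`. -/
def IsCFOnComponents (H : SimpleGraph V) (b : Sym2 V → ℕ) : Prop :=
  ∀ x y, x ≠ y → H.Reachable x y → CFJoined H b x y

lemma map_val_injective_of_connectedComponent (H : SimpleGraph V) :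
    Function.Injective
      fun s : Σ K : H.ConnectedComponent, Sym2 K.supp => s.2.map Subtype.val := by
  rintro ⟨K, e⟩ ⟨K', e'⟩ heq
  change e.map Subtype.val = e'.map Subtype.val at heq
  obtain rfl : K = K' := by
    induction e with | h u v =>
    have hu : (u : V) ∈ e'.map Subtype.val := heq ▸ Sym2.mem_mk_left _ _
    obtain ⟨w, -, hw⟩ := Sym2.mem_map.1 hu
    exact u.2.symm.trans (hw ▸ w.2)
  rw [Sym2.map.injective Subtype.val_injective heq]

lemma exists_isCFOnComponents
    (h : ∀ K : H.ConnectedComponent, CFConnColorable (H.induce K.supp) k) :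
    ∃ b : Sym2 V → ℕ, (∀ e ∈ H.edgeSet, b e < k) ∧ IsCFOnComponents H b := by
  choose c hlt hcf using h
  let b : Sym2 V → ℕ := Function.extend
    (fun s : Σ K : H.ConnectedComponent, Sym2 K.supp => s.2.map Subtype.val)
    (fun s => c s.1 s.2) 0
  have hb (K : H.ConnectedComponent) (e : Sym2 K.supp) : b (e.map Subtype.val) = c K e :=
    (map_val_injective_of_connectedComponent H).extend_apply _ _ ⟨K, e⟩
  refine ⟨b, fun e he => ?_, fun x y hxy hreach => ?_⟩
  · induction e with | h u v =>
    let K := H.connectedComponentMk u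
    have hvK : v ∈ K.supp := (K.mem_supp_congr_adj he).1 rfl
    exact (hb K s(⟨u, rfl⟩, ⟨v, hvK⟩)).trans_lt (hlt K _ he)
  · let K := H.connectedComponentMk x
    have hyK : y ∈ K.supp := ConnectedComponent.sound hreach.symm
    have hjoined := isCFConnColoring_iff_cfJoined.1 (hcf K) ⟨x, rfl⟩ ⟨y, hyK⟩
      (by simpa [Subtype.ext_iff] using hxy)
    exact hjoined.map (Embedding.induce K.supp).toHom Subtype.val_injective
      fun e _ => (hb K e).symm

/-! ### Bridges -/

lemma adj_of_isBridge (hconn : G.Preconnected) (h : G.IsBridge s(x, y)) : G.Adj x y :=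
  h.reachable_iff_adj.1 (hconn x y)

lemma mem_edgeSet_of_isBridge (hT : T.Preconnected) (hle : T ≤ G) (he : G.IsBridge e) :
    e ∈ T.edgeSet := by
  induction e with | h u v =>
  exact adj_of_isBridge hT (he.anti hle)

lemma not_isBridge_of_triangle {z : V} (hxy : G.Adj x y) (hyz : G.Adj y z) (hxz : G.Adj x z) :
    ¬ G.IsBridge s(x, y) := by
  intro h
  have hmem := isBridge_iff_forall_walk_mem_edges.1 h (.cons hxz (.cons hyz.symm .nil))
  simp [hxy.ne, hyz.ne, hxz.ne] at hmem

lemma not_reachable_deleteEdges_of_isBridge {e : Sym2 V} (he : G.IsBridge e) {p : G.Walk x y}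
    (hp : p.IsTrail) (hep : e ∈ p.edges) : ¬ (G.deleteEdges {e}).Reachable x y := by
  induction p with
  | nil => simp at hep
  | @cons x w y hxw p ih =>
    rw [Walk.isTrail_cons] at hp
    intro hreach
    by_cases hxwe : e = s(x, w)
    · subst hxwe
      exact he (hreach.trans (p.toDeleteEdge _ hp.2).reachable.symm)
    · have hadj : (G.deleteEdges {e}).Adj x w := by simp [hxw, Ne.symm hxwe]
      refine ih hp.1 ?_ (hadj.symm.reachable.trans hreach)
      simpa [hxwe] using hep

lemma mem_edges_of_isBridge {e : Sym2 V} (he : G.IsBridge e) {p : G.Walk x y} (hp : p.IsTrail)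
    (hep : e ∈ p.edges) (q : G.Walk x y) : e ∈ q.edges :=
  q.mem_edges_of_not_reachable_deleteEdges (not_reachable_deleteEdges_of_isBridge he hp hep)

lemma eq_of_isPath_of_forall_isBridge {p q : G.Walk x y} (hp : p.IsPath) (hq : q.IsPath)
    (hb : ∀ e ∈ p.edges, G.IsBridge e) : q = p := by
  induction p with
  | nil => exact (Walk.isPath_iff_nil.1 hq).eq_nil
  | @cons x w y hxw p ih =>
    have hmem := mem_edges_of_isBridge (hb _ List.mem_cons_self) hp.isTrail List.mem_cons_self q
    cases q with
    | nil => simp at hmem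
    | @cons _ w' _ hxw' q =>
      rcases List.mem_cons.1 hmem with hfirst | hlater
      · obtain rfl : w = w' := Sym2.congr_right.1 hfirst
        rw [ih hp.of_cons hq.of_cons fun e he => hb e (List.mem_cons_of_mem _ he)]
      · exact absurd (q.fst_mem_support_of_mem_edges hlater) ((Walk.cons_isPath_iff _ _).1 hq).2

lemma isCFConnColoring_comp_of_isBridge {H : SimpleGraph W} (hH : H.Preconnected) {f : H →g G}
    (hf : Function.Injective f) (hbridge : ∀ e ∈ H.edgeSet, G.IsBridge (e.map f))
    (hc : IsCFConnColoring G c) : IsCFConnColoring H (c ∘ Sym2.map f) := by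
  rw [isCFConnColoring_iff_cfJoined] at hc ⊢
  intro x y hxy
  obtain ⟨p, hp⟩ := (hH x y).exists_isPath
  obtain ⟨q, hq, huniq⟩ := hc (f x) (f y) (hf.ne hxy)
  obtain rfl : q = p.map f := eq_of_isPath_of_forall_isBridge (hp.map hf) hq fun e he => by
    obtain ⟨e', he', rfl⟩ := List.mem_map.1 (Walk.edges_map f p ▸ he)
    exact hbridge e' (p.edges_subset_edgeSet he')
  exact ⟨p, hp, (hasUniqueColor_map_iff hf).1 huniq⟩

lemma IsCFOnComponents.eq_of_color_eq (hb : IsCFOnComponents H b) (hH : H.IsAcyclic)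
    {e₁ e₂ : Sym2 V} (he₁ : e₁ ∈ H.edgeSet) (he₂ : e₂ ∈ H.edgeSet) {z : V} (hz₁ : z ∈ e₁)
    (hz₂ : z ∈ e₂) (heq : b e₁ = b e₂) : e₁ = e₂ := by
  obtain ⟨y₁, rfl⟩ := hz₁
  obtain ⟨y₂, rfl⟩ := hz₂
  rw [mem_edgeSet] at he₁ he₂
  by_contra hne
  have hy : y₁ ≠ y₂ := fun h => hne (h ▸ rfl)
  let p : H.Walk y₁ y₂ := .cons he₁.symm (.cons he₂ .nil)
  have hp : p.IsPath := by simp [p, Walk.cons_isPath_iff, he₁.ne', he₂.ne, hy]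
  obtain ⟨q, hq, huniq⟩ := hb y₁ y₂ hy p.reachable
  obtain rfl : q = p := congrArg Subtype.val ((hH.subsingleton_path y₁ y₂).elim ⟨q, hq⟩ ⟨p, hp⟩)
  obtain ⟨e, he, huniq⟩ := huniq
  simp only [p, Walk.edges_cons, Walk.edges_nil, List.forall_mem_cons, Sym2.eq_swap (a := y₁)]
    at he huniq
  grind

/-! ### The forest of bridges -/

lemma mem_edgeSet_bridgeGraph {e : Sym2 V} : e ∈ (bridgeGraph G).edgeSet ↔ G.IsBridge e := by
  induction e with | h u v =>
  simp only [bridgeGraph, mem_edgeSet, fromEdgeSet_adj, Set.mem_ofPred_eq, and_iff_left_iff_imp]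
  rintro h rfl
  exact h .rfl

lemma bridgeGraph_le (hconn : G.Preconnected) : bridgeGraph G ≤ G := fun _ _ h =>
  adj_of_isBridge hconn (mem_edgeSet_bridgeGraph.1 h)

lemma isAcyclic_bridgeGraph (hconn : G.Preconnected) : (bridgeGraph G).IsAcyclic :=
  isAcyclic_iff_forall_isBridge.2 fun _ he =>
    (mem_edgeSet_bridgeGraph.1 he).anti (bridgeGraph_le hconn)

lemma CFConnColorable.bridgeGraph_component (hconn : G.Preconnected) (h : CFConnColorable G k)
    (K : (bridgeGraph G).ConnectedComponent) :
    CFConnColorable ((bridgeGraph G).induce K.supp) k := by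
  obtain ⟨c, hlt, hc⟩ := h
  let f : (bridgeGraph G).induce K.supp →g G :=
    (Hom.ofLE (bridgeGraph_le hconn)).comp (Embedding.induce K.supp).toHom
  have hbridge : ∀ e ∈ ((bridgeGraph G).induce K.supp).edgeSet, G.IsBridge (e.map f) := by
    rintro ⟨u, v⟩ he
    exact mem_edgeSet_bridgeGraph.1 (show s(u.1, v.1) ∈ (bridgeGraph G).edgeSet from he)
  exact ⟨c ∘ Sym2.map f, fun e he => hlt _ (f.map_mem_edgeSet he),
    isCFConnColoring_comp_of_isBridge K.connected_toSimpleGraph.preconnected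
      Subtype.val_injective hbridge hc⟩

lemma CFConnColorable.cfConn_component_le_hG (hconn : G.Preconnected) (h : CFConnColorable G k)
    (K : (bridgeGraph G).ConnectedComponent) :
    cfConn ((bridgeGraph G).induce K.supp) ≤ hG G := by
  refine le_csSup ⟨k, ?_⟩ ⟨K, rfl⟩
  rintro _ ⟨K', rfl⟩
  exact (h.bridgeGraph_component hconn K').cfConn_le

lemma CFConnColorable.hG_le (hconn : G.Preconnected) (h : CFConnColorable G k) : hG G ≤ k := by
  refine csSup_le' ?_
  rintro _ ⟨K, rfl⟩
  exact (h.bridgeGraph_component hconn K).cfConn_le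

/-! ### Spanning trees -/

lemma exists_isTree_le_forall_adj (hconn : G.Connected) (r : V) :
    ∃ T ≤ G, T.IsTree ∧ ∀ w, G.Adj r w → T.Adj r w := by
  obtain ⟨T, hsT, hle, hT⟩ := hconn.exists_isTree_le_of_le_of_isAcyclic
    (inf_le_left : G ⊓ starGraph r ≤ G) ((isAcyclic_starGraph r).anti inf_le_right)
  exact ⟨T, hle, hT, fun w hw => hsT ⟨hw, starGraph_center_adj hw.ne⟩⟩

lemma exists_isPath_through_edge (hle : H ≤ G) {s t : V} (hst : G.Adj s t)
    (hxs : H.Reachable x s) (hty : H.Reachable t y) (hxy : ¬ H.Reachable x y) :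
    ∃ q : G.Walk x y, q.IsPath ∧ s(s, t) ∈ q.edges ∧
      ∀ e ∈ q.edges, e ∉ H.edgeSet → e = s(s, t) := by
  classical
  obtain ⟨q₁, hq₁⟩ := hxs.exists_isPath
  obtain ⟨q₂, hq₂⟩ := hty.exists_isPath
  refine ⟨(q₁.mapLe hle).append (.cons hst (q₂.mapLe hle)), ?_, by simp, fun e he heH => ?_⟩
  · rw [Walk.isPath_def, Walk.support_append, Walk.support_cons, List.tail_cons,
      Walk.support_mapLe_eq_support, Walk.support_mapLe_eq_support, List.nodup_append']
    refine ⟨hq₁.support_nodup, hq₂.support_nodup, fun z hz₁ hz₂ => hxy ?_⟩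
    exact (q₁.takeUntil z hz₁).reachable.trans (q₂.dropUntil z hz₂).reachable
  · rw [Walk.edges_append, Walk.edges_cons, Walk.edges_mapLe_eq_edges,
      Walk.edges_mapLe_eq_edges, List.mem_append, List.mem_cons] at he
    rcases he with he | he | he
    · exact absurd (q₁.edges_subset_edgeSet he) heH
    · exact he
    · exact absurd (q₂.edges_subset_edgeSet he) heH

lemma reachable_deleteEdges_or (hconn : G.Preconnected) (a d z : V) :
    (G.deleteEdges {s(a, d)}).Reachable z a ∨ (G.deleteEdges {s(a, d)}).Reachable z d := by
  set F := G.deleteEdges {s(a, d)}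
  by_contra hz
  obtain ⟨w⟩ := hconn a z
  obtain ⟨⟨⟨s, t⟩, hst⟩, -, hs, ht⟩ :=
    w.exists_boundary_dart {z | F.Reachable z a ∨ F.Reachable z d} (.inl .rfl) hz
  have hta : t ≠ a := by rintro rfl; exact ht (.inl .rfl)
  have htd : t ≠ d := by rintro rfl; exact ht (.inr .rfl)
  have hts : F.Adj t s := by
    simp only [F, deleteEdges_adj, Set.mem_singleton_iff, Sym2.eq_iff]
    exact ⟨hst.symm, by tauto⟩
  exact ht (hs.imp hts.reachable.trans hts.reachable.trans)

lemma reachable_deleteEdges_of_not_reachable (hconn : G.Preconnected) {e : Sym2 V} {z : V}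
    (hxy : ¬ (G.deleteEdges {e}).Reachable x y) (hxz : ¬ (G.deleteEdges {e}).Reachable x z) :
    (G.deleteEdges {e}).Reachable z y := by
  induction e with | h a d =>
  have hside := reachable_deleteEdges_or hconn a d
  rcases hside x with hx | hx
  · have hy := (hside y).resolve_left fun hy => hxy (hx.trans hy.symm)
    have hz := (hside z).resolve_left fun hz => hxz (hx.trans hz.symm)
    exact hz.trans hy.symm
  · have hy := (hside y).resolve_right fun hy => hxy (hx.trans hy.symm)
    have hz := (hside z).resolve_right fun hz => hxz (hx.trans hz.symm)
    exact hz.trans hy.symm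

lemma exists_isPath_existsUnique_notMem_edgeSet (hT : T.IsTree) (hle : T ≤ G)
    {p : T.Walk x y} (hp : p.IsPath) {g : Sym2 V} (hg : g ∈ p.edges) (hgb : ¬ G.IsBridge g) :
    ∃ q : G.Walk x y, q.IsPath ∧ ∃ m ∈ q.edges, m ∉ T.edgeSet ∧
      ∀ e ∈ q.edges, e ∉ T.edgeSet → e = m := by
  set F := T.deleteEdges {g}
  have hxy : ¬ F.Reachable x y := not_reachable_deleteEdges_of_isBridge
    (isAcyclic_iff_forall_isBridge.1 hT.isAcyclic (p.edges_subset_edgeSet hg)) hp.isTrail hg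
  obtain ⟨w⟩ : (G.deleteEdges {g}).Reachable x y := by
    induction g with | h a d =>
    exact (hT.connected.mono hle).connected_delete_edge_of_not_isBridge hgb x y
  obtain ⟨⟨⟨s, t⟩, hst⟩, -, hs : F.Reachable x s, ht : ¬ F.Reachable x t⟩ :=
    w.exists_boundary_dart {z | F.Reachable x z} .rfl hxy
  obtain ⟨hstG, hstg⟩ := deleteEdges_adj.1 hst
  have hty : F.Reachable t y :=
    reachable_deleteEdges_of_not_reachable hT.connected.preconnected hxy ht
  obtain ⟨q, hq, hmem, huniq⟩ :=
    exists_isPath_through_edge ((deleteEdges_le {g}).trans hle) hstG hs hty hxy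
  refine ⟨q, hq, s(s, t), hmem, fun hstT => ht (hs.trans (Adj.reachable ?_)), fun e he heT =>
    huniq e he fun heF => heT (edgeSet_mono (deleteEdges_le {g}) heF)⟩
  exact deleteEdges_adj.2 ⟨hstT, hstg⟩

/-! ### Hubs in graphs of diameter at most three -/

lemma exists_edges_eq_of_disjoint_isBridge (hconn : G.Connected)
    (hdist : ∀ u v, G.dist u v ≤ 3) {p : G.Walk x y} (hp : p.IsTrail) {e₁ e₂ : Sym2 V}
    (hb₁ : G.IsBridge e₁) (hb₂ : G.IsBridge e₂) (he₁ : e₁ ∈ p.edges) (he₂ : e₂ ∈ p.edges)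
    (hdisj : ∀ z ∈ e₁, z ∉ e₂) :
    ∃ u v, G.Adj x u ∧ G.Adj u v ∧ G.Adj v y ∧ [x, u, v, y].Nodup ∧
      (e₁ = s(x, u) ∧ e₂ = s(v, y) ∨ e₂ = s(x, u) ∧ e₁ = s(v, y)) := by
  obtain ⟨q, hq, hlen⟩ := hconn.exists_path_of_dist x y
  replace hlen := hlen.trans_le (hdist x y)
  have h₁ := mem_edges_of_isBridge hb₁ hp he₁ q
  have h₂ := mem_edges_of_isBridge hb₂ hp he₂ q
  rcases q with - | ⟨hxu, - | ⟨huv, - | ⟨hvy, - | ⟨hyw, q⟩⟩⟩⟩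
  · simp at h₁
  · simp only [Walk.edges_cons, Walk.edges_nil, List.mem_singleton] at h₁ h₂
    exact absurd (h₂ ▸ Sym2.mem_mk_left _ _) (hdisj x (h₁ ▸ Sym2.mem_mk_left _ _))
  · rename_i u
    simp only [Walk.edges_cons, Walk.edges_nil, List.mem_cons, List.not_mem_nil, or_false]
      at h₁ h₂
    have hu := hdisj u
    rcases h₁ with rfl | rfl <;> rcases h₂ with rfl | rfl <;> simp at hu
  · rename_i u v
    refine ⟨u, v, hxu, huv, hvy, hq.support_nodup, ?_⟩
    simp only [Walk.edges_cons, Walk.edges_nil, List.mem_cons, List.not_mem_nil, or_false]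
      at h₁ h₂
    have hu := hdisj u
    have hv := hdisj v
    rcases h₁ with rfl | rfl | rfl <;> rcases h₂ with rfl | rfl | rfl <;> simp at hu hv ⊢
  · simp only [Walk.length_cons] at hlen
    omega

/-- The vertices `x, u, v, y` form a path of `G` whose end edges are bridges and whose middle edge
is not. If two bridges of the same color separate `x` from `y`, such a path joins them. -/
structure IsPendantPath (G : SimpleGraph V) (x u v y : V) : Prop where
  isBridge_left : G.IsBridge s(x, u)
  isBridge_right : G.IsBridge s(v, y)
  adj : G.Adj u v
  not_isBridge : ¬ G.IsBridge s(u, v)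
  nodup : [x, u, v, y].Nodup

/-- A hub is an inner vertex of a pendant path; the hubs are the vertices through which the ends of
pendant paths are joined. By `IsPendantPath.symm` it is enough to consider the second vertex. -/
def IsHub (G : SimpleGraph V) (u : V) : Prop :=
  ∃ x v y, IsPendantPath G x u v y

variable {u v z : V}

namespace IsPendantPath

lemma symm (h : IsPendantPath G x u v y) : IsPendantPath G y v u x where
  isBridge_left := Sym2.eq_swap ▸ h.isBridge_right
  isBridge_right := Sym2.eq_swap ▸ h.isBridge_left
  adj := h.adj.symm
  not_isBridge := Sym2.eq_swap ▸ h.not_isBridge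
  nodup := by simpa using List.nodup_reverse.2 h.nodup

lemma isHub_left (h : IsPendantPath G x u v y) : IsHub G u := ⟨x, v, y, h⟩

lemma isHub_right (h : IsPendantPath G x u v y) : IsHub G v := h.symm.isHub_left

lemma eq_of_adj (hconn : G.Connected) (hdist : ∀ u v, G.dist u v ≤ 3)
    (h : IsPendantPath G x u v y) (hxz : G.Adj x z) : z = u := by
  by_contra hzu
  have hxu := adj_of_isBridge hconn.preconnected h.isBridge_left
  have hvy := adj_of_isBridge hconn.preconnected h.isBridge_right
  have hnodup := h.nodup
  have hzv : z ≠ v := by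
    rintro rfl
    exact not_isBridge_of_triangle hxu h.adj hxz h.isBridge_left
  let p : G.Walk z y := .cons hxz.symm (.cons hxu (.cons h.adj (.cons hvy .nil)))
  have hp : p.IsTrail := by
    simp only [p, Walk.isTrail_def, Walk.edges_cons, Walk.edges_nil, List.nodup_cons, List.mem_cons,
      Sym2.eq_iff]
    grind
  have hzy : z ≠ y := fun hzy =>
    not_reachable_deleteEdges_of_isBridge h.isBridge_left hp (by simp [p]) (hzy ▸ .rfl)
  have hdisj : ∀ w ∈ s(x, u), w ∉ s(v, y) := by
    simp only [Sym2.mem_iff]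
    grind
  obtain ⟨s, -, -, -, -, -, ⟨hzs, -⟩ | ⟨hzs, -⟩⟩ := exists_edges_eq_of_disjoint_isBridge hconn hdist
    hp h.isBridge_left h.isBridge_right (by simp [p]) (by simp [p]) hdisj
  · have hz : z ∈ s(x, u) := hzs ▸ Sym2.mem_mk_left z s
    exact (Sym2.mem_iff.1 hz).elim hxz.ne' hzu
  · have hz : z ∈ s(v, y) := hzs ▸ Sym2.mem_mk_left z s
    exact (Sym2.mem_iff.1 hz).elim hzv hzy

end IsPendantPath

lemma IsPendantPath.not_isHub (hconn : G.Connected) (hdist : ∀ u v, G.dist u v ≤ 3)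
    (h : IsPendantPath G x u v y) : ¬ IsHub G x := by
  rintro ⟨x', v', y', h'⟩
  have hx' := adj_of_isBridge hconn.preconnected h'.isBridge_left
  have hnodup := h'.nodup
  simp [h.eq_of_adj hconn hdist hx'.symm, h.eq_of_adj hconn hdist h'.adj] at hnodup

lemma isClique_isHub (hconn : G.Connected) (hdist : ∀ u v, G.dist u v ≤ 3) :
    G.IsClique {u | IsHub G u} := by
  rintro u ⟨x, v, y, h⟩ u' ⟨x', v', y', h'⟩ hne
  obtain ⟨q, -, hlen⟩ := hconn.exists_path_of_dist x x'
  replace hlen := hlen.trans_le (hdist x x')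
  rcases q with - | ⟨hxs, - | ⟨hst, - | ⟨htx', - | ⟨hx'w, q⟩⟩⟩⟩
  · have hxu := adj_of_isBridge hconn.preconnected h.isBridge_left
    exact absurd (h'.eq_of_adj hconn hdist hxu) hne
  · obtain rfl := h.eq_of_adj hconn hdist hxs
    exact absurd h.isHub_left (h'.not_isHub hconn hdist)
  · obtain rfl := h.eq_of_adj hconn hdist hxs
    exact absurd (h'.eq_of_adj hconn hdist hst.symm) hne
  · obtain rfl := h.eq_of_adj hconn hdist hxs
    obtain rfl := h'.eq_of_adj hconn hdist htx'.symm
    exact hst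
  · simp only [Walk.length_cons] at hlen
    omega

lemma IsHub.not_isBridge (hconn : G.Connected) (hdist : ∀ u v, G.dist u v ≤ 3)
    (hu : IsHub G u) (hv : IsHub G v) (huv : u ≠ v) : ¬ G.IsBridge s(u, v) := by
  obtain ⟨x, w, y, h⟩ := id hu
  obtain rfl | hvw := eq_or_ne v w
  · exact h.not_isBridge
  · exact not_isBridge_of_triangle (isClique_isHub hconn hdist hu hv huv)
      (isClique_isHub hconn hdist hv h.isHub_right hvw) h.adj

lemma exists_isPendantPath_of_color_eq (hconn : G.Connected) (hdist : ∀ u v, G.dist u v ≤ 3)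
    (hb : IsCFOnComponents (bridgeGraph G) b) {p : G.Walk x y} (hp : p.IsPath) {g e₁ e₂ : Sym2 V}
    (hg : g ∈ p.edges) (hgb : ¬ G.IsBridge g) (he₁ : e₁ ∈ p.edges) (he₂ : e₂ ∈ p.edges)
    (hb₁ : G.IsBridge e₁) (hb₂ : G.IsBridge e₂) (hne : e₁ ≠ e₂) (heq : b e₁ = b e₂) :
    ∃ u v, IsPendantPath G x u v y ∧ b s(x, u) = b e₁ ∧ b s(v, y) = b e₁ := by
  have hdisj : ∀ z ∈ e₁, z ∉ e₂ := fun z hz₁ hz₂ =>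
    hne <| hb.eq_of_color_eq (isAcyclic_bridgeGraph hconn.preconnected)
      (mem_edgeSet_bridgeGraph.2 hb₁) (mem_edgeSet_bridgeGraph.2 hb₂) hz₁ hz₂ heq
  obtain ⟨u, v, hxu, huv, hvy, hnodup, hends⟩ :=
    exists_edges_eq_of_disjoint_isBridge hconn hdist hp.isTrail hb₁ hb₂ he₁ he₂ hdisj
  obtain ⟨hxub, hvyb, hcx, hcy⟩ : G.IsBridge s(x, u) ∧ G.IsBridge s(v, y) ∧
      b s(x, u) = b e₁ ∧ b s(v, y) = b e₁ := by
    rcases hends with ⟨rfl, rfl⟩ | ⟨rfl, rfl⟩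
    · exact ⟨hb₁, hb₂, rfl, heq.symm⟩
    · exact ⟨hb₂, hb₁, heq.symm, rfl⟩
  refine ⟨u, v, ⟨hxub, hvyb, huv, fun huvb => hgb ?_, hnodup⟩, hcx, hcy⟩
  let q : G.Walk x y := .cons hxu (.cons huv (.cons hvy .nil))
  have hqb : ∀ e ∈ q.edges, G.IsBridge e := by simp [q, hxub, huvb, hvyb]
  have hpq : p = q := eq_of_isPath_of_forall_isBridge ((Walk.isPath_def q).2 hnodup) hp hqb
  exact hqb g (hpq ▸ hg)

/-! ### The coloring -/

open Classical in
/-- The coloring that agrees with `b` on bridges, gives color `2` to `f` and color `0` to the other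
edges of `T`, and color `1` to the remaining edges. The choice of `f` matters only if `f` is an edge
of `T` and not a bridge. -/
noncomputable def treeColoring (G T : SimpleGraph V) (b : Sym2 V → ℕ) (f e : Sym2 V) : ℕ :=
  if G.IsBridge e then b e else if e ∈ T.edgeSet then if e = f then 2 else 0 else 1

variable {e f : Sym2 V}

lemma treeColoring_of_isBridge (he : G.IsBridge e) : treeColoring G T b f e = b e :=
  if_pos he

lemma treeColoring_of_notMem_edgeSet (he : ¬ G.IsBridge e) (heT : e ∉ T.edgeSet) :
    treeColoring G T b f e = 1 := by
  simp [treeColoring, he, heT]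

lemma treeColoring_eq_one_iff_of_mem_edgeSet (heT : e ∈ T.edgeSet) :
    treeColoring G T b f e = 1 ↔ G.IsBridge e ∧ b e = 1 := by
  unfold treeColoring
  split_ifs <;> simp_all

lemma treeColoring_eq_two_iff_of_not_isBridge (he : ¬ G.IsBridge e) :
    treeColoring G T b f e = 2 ↔ e ∈ T.edgeSet ∧ e = f := by
  unfold treeColoring
  split_ifs <;> simp_all

lemma treeColoring_lt (hk : 3 ≤ k) (hb : G.IsBridge e → b e < k) :
    treeColoring G T b f e < k := by
  unfold treeColoring
  split_ifs with he
  exacts [hb he, by omega, by omega, by omega]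

lemma cfJoined_of_forall_isBridge (hconn : G.Preconnected)
    (hb : IsCFOnComponents (bridgeGraph G) b) (hbc : ∀ e, G.IsBridge e → b e = c e) (hxy : x ≠ y)
    {p : G.Walk x y} (hp : ∀ e ∈ p.edges, G.IsBridge e) : CFJoined G c x y := by
  have hreach : (bridgeGraph G).Reachable x y :=
    (p.transfer (bridgeGraph G) fun e he => mem_edgeSet_bridgeGraph.2 (hp e he)).reachable
  refine (hb x y hxy hreach).map (Hom.ofLE (bridgeGraph_le hconn)) Function.injective_id ?_
  intro e he
  simpa using hbc e (mem_edgeSet_bridgeGraph.1 he)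

lemma cfJoined_treeColoring_of_existsUnique (hle : T ≤ G) {p : T.Walk x y} (hp : p.IsPath)
    (he : e ∈ p.edges) (heb : G.IsBridge e) (heone : b e = 1)
    (huniq : ∀ e' ∈ p.edges, G.IsBridge e' → b e' = 1 → e' = e) :
    CFJoined G (treeColoring G T b f) x y := by
  refine ⟨p.mapLe hle, hp.mapLe hle, e, by simpa using he, fun e' he' heq => ?_⟩
  rw [Walk.edges_mapLe_eq_edges] at he'
  rw [treeColoring_of_isBridge heb, heone,
    treeColoring_eq_one_iff_of_mem_edgeSet (p.edges_subset_edgeSet he')] at heq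
  exact huniq e' he' heq.1 heq.2

lemma cfJoined_treeColoring_of_forall_ne_one (hT : T.IsTree) (hle : T ≤ G) {p : T.Walk x y}
    (hp : p.IsPath) {g : Sym2 V} (hg : g ∈ p.edges) (hgb : ¬ G.IsBridge g)
    (hne : ∀ e ∈ p.edges, G.IsBridge e → b e ≠ 1) : CFJoined G (treeColoring G T b f) x y := by
  obtain ⟨q, hq, m, hm, hmT, huniq⟩ :=
    exists_isPath_existsUnique_notMem_edgeSet hT hle hp hg hgb
  have hmb : ¬ G.IsBridge m := fun h =>
    hmT (mem_edgeSet_of_isBridge hT.connected.preconnected hle h)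
  refine ⟨q, hq, m, hm, fun e he heq => huniq e he fun heT => ?_⟩
  rw [treeColoring_of_notMem_edgeSet hmb hmT, treeColoring_eq_one_iff_of_mem_edgeSet heT] at heq
  have hep : e ∈ p.edges := by
    simpa using mem_edges_of_isBridge heq.1 hq.isTrail he (p.mapLe hle)
  exact hne e hep heq.1 heq.2

lemma cfJoined_treeColoring_or_exists_isPendantPath (hconn : G.Connected)
    (hdist : ∀ u v, G.dist u v ≤ 3) (hT : T.IsTree) (hle : T ≤ G)
    (hb : IsCFOnComponents (bridgeGraph G) b) (f : Sym2 V) (hxy : x ≠ y) :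
    CFJoined G (treeColoring G T b f) x y ∨
      ∃ u v, IsPendantPath G x u v y ∧ b s(x, u) = 1 ∧ b s(v, y) = 1 := by
  obtain ⟨p, hp⟩ := (hT.connected x y).exists_isPath
  have hedges : (p.mapLe hle).edges = p.edges := Walk.edges_mapLe_eq_edges hle p
  by_cases hall : ∀ e ∈ p.edges, G.IsBridge e
  · exact .inl <| cfJoined_of_forall_isBridge hconn.preconnected hb
      (fun e he => (treeColoring_of_isBridge he).symm) hxy (hedges ▸ hall)
  push Not at hall
  obtain ⟨g, hg, hgb⟩ := hall
  by_cases hone : ∀ e ∈ p.edges, G.IsBridge e → b e ≠ 1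
  · exact .inl (cfJoined_treeColoring_of_forall_ne_one hT hle hp hg hgb hone)
  push Not at hone
  obtain ⟨e₁, he₁, hb₁, hone₁⟩ := hone
  by_cases huniq : ∀ e ∈ p.edges, G.IsBridge e → b e = 1 → e = e₁
  · exact .inl (cfJoined_treeColoring_of_existsUnique hle hp he₁ hb₁ hone₁ huniq)
  push Not at huniq
  obtain ⟨e₂, he₂, hb₂, hone₂, hne⟩ := huniq
  rw [← hedges] at hg he₁ he₂
  obtain ⟨u, v, h, hcx, hcy⟩ :=
    exists_isPendantPath_of_color_eq hconn hdist hb (hp.mapLe hle) hg hgb he₁ he₂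
    hb₁ hb₂ hne.symm (hone₁.trans hone₂.symm)
  exact .inr ⟨u, v, h, hcx.trans hone₁, hcy.trans hone₁⟩

/-! ### Joining hubs -/

lemma exists_isPath_through_edge_of_isClique {s : Set V} (hs : G.IsClique s) {a d : V}
    (ha : a ∈ s) (hd : d ∈ s) (hu : u ∈ s) (hv : v ∈ s) (had : a ≠ d) (hua : u ≠ a) (hva : v ≠ a)
    (huv : u ≠ v) :
    ∃ r : G.Walk u v, r.IsPath ∧ (∀ w ∈ r.support, w ∈ s) ∧ s(a, d) ∈ r.edges := by
  obtain rfl | hud := eq_or_ne u d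
  · refine ⟨.cons (hs hu ha hua) (.cons (hs ha hv hva.symm) .nil), ?_, ?_, ?_⟩ <;>
      simp [Walk.cons_isPath_iff, *, hva.symm]
  obtain rfl | hvd := eq_or_ne v d
  · refine ⟨.cons (hs hu ha hua) (.cons (hs ha hv hva.symm) .nil), ?_, ?_, ?_⟩ <;>
      simp [Walk.cons_isPath_iff, *]
  refine ⟨.cons (hs hu ha hua) (.cons (hs ha hd had) (.cons (hs hd hv hvd.symm) .nil)),
    ?_, ?_, ?_⟩ <;> simp [Walk.cons_isPath_iff, *, hva.symm, hvd.symm]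

lemma cfJoined_of_cons_concat (hxu : G.Adj x u) {r : G.Walk u v} (hvy : G.Adj v y) (hr : r.IsPath)
    (hx : x ∉ r.support) (hy : y ∉ r.support) (hxy : x ≠ y) (he : e ∈ r.edges)
    (hcx : c s(x, u) ≠ c e) (hcy : c s(v, y) ≠ c e)
    (huniq : ∀ e' ∈ r.edges, c e' = c e → e' = e) : CFJoined G c x y := by
  refine ⟨.cons hxu (r.concat hvy), ?_, e, by simp [Walk.edges_concat, he], ?_⟩
  · simp [Walk.cons_isPath_iff, Walk.support_concat, hr.concat hy hvy, hx, hxy]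
  · simp only [Walk.edges_cons, Walk.edges_concat, List.concat_eq_append, List.mem_cons,
      List.mem_append, List.not_mem_nil, or_false]
    rintro e' (rfl | he' | rfl) heq
    exacts [absurd heq hcx, huniq e' he' heq, absurd heq hcy]

variable {u₁ u₂ : V}

lemma IsHub.exists_isPath_treeColoring (hconn : G.Connected) (hdist : ∀ u v, G.dist u v ≤ 3)
    (hu₁ : IsHub G u₁) (hu₂ : IsHub G u₂) (hne : u₁ ≠ u₂) (hT : ∀ w, G.Adj u₁ w → T.Adj u₁ w)
    (b : Sym2 V → ℕ) (hu : IsHub G u) (hv : IsHub G v) (huv : u ≠ v) :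
    ∃ r : G.Walk u v, r.IsPath ∧ (∀ w ∈ r.support, IsHub G w) ∧
      ∃ e ∈ r.edges, treeColoring G T b s(u₁, u₂) e ≠ 1 ∧
        ∀ e' ∈ r.edges,
          treeColoring G T b s(u₁, u₂) e' = treeColoring G T b s(u₁, u₂) e → e' = e := by
  have hclique := isClique_isHub hconn hdist
  by_cases hTuv : T.Adj u v
  · have hcol : treeColoring G T b s(u₁, u₂) s(u, v) ≠ 1 := fun h =>
      hu.not_isBridge hconn hdist hv huv ((treeColoring_eq_one_iff_of_mem_edgeSet hTuv).1 h).1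
    exact ⟨(hclique hu hv huv).toWalk, by simp [huv], by simp [hu, hv], s(u, v), by simp, hcol,
      by simp⟩
  have huu₁ : u ≠ u₁ := by
    rintro rfl
    exact hTuv (hT v (hclique hu hv huv))
  have hvu₁ : v ≠ u₁ := by
    rintro rfl
    exact hTuv (hT u (hclique hv hu huv.symm)).symm
  obtain ⟨r, hr, hhub, hf⟩ :=
    exists_isPath_through_edge_of_isClique hclique hu₁ hu₂ hu hv hne huu₁ hvu₁ huv
  have hcol : treeColoring G T b s(u₁, u₂) s(u₁, u₂) = 2 :=
    (treeColoring_eq_two_iff_of_not_isBridge (hu₁.not_isBridge hconn hdist hu₂ hne)).2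
      ⟨hT u₂ (hclique hu₁ hu₂ hne), rfl⟩
  refine ⟨r, hr, hhub, _, hf, by simp [hcol], fun e he heq => ?_⟩
  have heb : ¬ G.IsBridge e := by
    induction e with | h s t =>
    exact (hhub s (r.fst_mem_support_of_mem_edges he)).not_isBridge hconn hdist
      (hhub t (r.snd_mem_support_of_mem_edges he)) (r.adj_of_mem_edges he).ne
  exact ((treeColoring_eq_two_iff_of_not_isBridge heb).1 (heq.trans hcol)).2

lemma IsPendantPath.cfJoined_treeColoring (hconn : G.Connected) (hdist : ∀ u v, G.dist u v ≤ 3)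
    (hu₁ : IsHub G u₁) (hu₂ : IsHub G u₂) (hne : u₁ ≠ u₂) (hT : ∀ w, G.Adj u₁ w → T.Adj u₁ w)
    (h : IsPendantPath G x u v y) (hcx : b s(x, u) = 1) (hcy : b s(v, y) = 1) :
    CFJoined G (treeColoring G T b s(u₁, u₂)) x y := by
  obtain ⟨r, hr, hhub, e, he, hone, huniq⟩ := IsHub.exists_isPath_treeColoring hconn hdist hu₁ hu₂
    hne hT b h.isHub_left h.isHub_right h.adj.ne
  have hxy : x ≠ y := by
    have hnodup := h.nodup
    grind
  refine cfJoined_of_cons_concat (adj_of_isBridge hconn.preconnected h.isBridge_left)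
    (adj_of_isBridge hconn.preconnected h.isBridge_right) hr
    (fun hx => h.not_isHub hconn hdist (hhub x hx))
    (fun hy => h.symm.not_isHub hconn hdist (hhub y hy)) hxy he ?_ ?_ huniq
  · rw [treeColoring_of_isBridge h.isBridge_left, hcx]
    exact hone.symm
  · rw [treeColoring_of_isBridge h.isBridge_right, hcy]
    exact hone.symm

lemma exists_isCFConnColoring_treeColoring (hconn : G.Connected) (hdist : ∀ u v, G.dist u v ≤ 3)
    (hb : IsCFOnComponents (bridgeGraph G) b) :
    ∃ T f, IsCFConnColoring G (treeColoring G T b f) := by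
  by_cases hpend : ∃ x u v y, IsPendantPath G x u v y
  · obtain ⟨x₁, u₁, u₂, y₁, h₁⟩ := hpend
    obtain ⟨T, hle, hT, hstar⟩ := exists_isTree_le_forall_adj hconn u₁
    refine ⟨T, s(u₁, u₂), isCFConnColoring_iff_cfJoined.2 fun x y hxy => ?_⟩
    obtain hjoined | ⟨u, v, h, hcx, hcy⟩ :=
      cfJoined_treeColoring_or_exists_isPendantPath hconn hdist hT hle hb s(u₁, u₂) hxy
    · exact hjoined
    · exact h.cfJoined_treeColoring hconn hdist h₁.isHub_left h₁.isHub_right h₁.adj.ne hstar hcx hcy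
  · obtain ⟨T, hle, hT⟩ := hconn.exists_isTree_le
    obtain ⟨r⟩ := hconn.nonempty
    refine ⟨T, s(r, r), isCFConnColoring_iff_cfJoined.2 fun x y hxy => ?_⟩
    obtain hjoined | ⟨u, v, h, -⟩ :=
      cfJoined_treeColoring_or_exists_isPendantPath hconn hdist hT hle hb s(r, r) hxy
    · exact hjoined
    · exact absurd ⟨x, u, v, y, h⟩ hpend

lemma cfConnColorable_of_components (hconn : G.Connected) (hdist : ∀ u v, G.dist u v ≤ 3)
    (hk : 3 ≤ k) (h : ∀ K : (bridgeGraph G).ConnectedComponent,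
      CFConnColorable ((bridgeGraph G).induce K.supp) k) : CFConnColorable G k := by
  obtain ⟨b, hlt, hb⟩ := exists_isCFOnComponents h
  obtain ⟨T, f, hc⟩ := exists_isCFConnColoring_treeColoring hconn hdist hb
  exact ⟨treeColoring G T b f, fun e _ =>
    treeColoring_lt hk fun he => hlt e (mem_edgeSet_bridgeGraph.2 he), hc⟩

end CFConnection

open CFConnection in
theorem cfConn_of_diam_three_of_hG_ge_three_general {V : Type*} (G : SimpleGraph V)
    (hconn : G.Connected) (hdist : ∀ u v, G.dist u v ≤ 3) (hcol : ∃ k, CFConnColorable G k)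
    (hh : 3 ≤ hG G) : cfConn G = hG G := by
  obtain ⟨k, h⟩ := hcol
  have hcomponent (K : (bridgeGraph G).ConnectedComponent) :
      CFConnColorable ((bridgeGraph G).induce K.supp) (hG G) :=
    (h.bridgeGraph_component hconn.preconnected K).cfConnColorable_cfConn.mono
      (h.cfConn_component_le_hG hconn.preconnected K)
  exact le_antisymm (cfConnColorable_of_components hconn hdist hh hcomponent).cfConn_le
    (h.cfConnColorable_cfConn.hG_le hconn.preconnected)

/-- For a connected graph `G` of diameter `3` with `h(G) ≥ 3`, `cfc(G) = h(G)`. -/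
theorem cfConn_of_diam_three_of_hG_ge_three {V : Type*} [Fintype V]
    (G : SimpleGraph V) (hconn : G.Connected) (hdiam : G.diam = 3)
    (hh : 3 ≤ hG G) : cfConn G = hG G :=
  cfConn_of_diam_three_of_hG_ge_three_general G hconn
    (fun _ _ => hdiam ▸ dist_le_diam (ediam_ne_top_of_diam_ne_zero (by omega)))
    (CFConnection.exists_cfConnColorable hconn.preconnected) hh
end

section
/- For a connected graph G of diameter 4 with h(G) ≥ 3, cfc(G) = h(G); and if h(G) ≤ 1 then cfc(G) = 2. -/
open SimpleGraph

/-!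
Vertices joined by bridges alone are joined by a unique path, so every conflict-free connection
coloring of `G` restricts to one of each component of the forest of bridges, and `h(G) ≤ cfc(G)`.

For the upper bounds, color the bridges by optimal colorings of these components and the other
edges by means of two disjoint *switches*. A switch is a set `F` of non-bridges such that any two
vertices are joined by a path avoiding `F` and, unless bridges alone join them, also by a path with
exactly one edge in `F`. A pair of disjoint switches is built by growing a connected vertex set: a
bridge or a cycle glued at one vertex contributes no edge or one edge to each switch, and an ear
needs no new switch edge at all.

All paths from `u` to `v` cross the same bridges, so if the non-bridges colored `j` form a switch
and at most one of the crossed bridges has color `j`, then `j` occurs exactly once on some path from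
`u` to `v`. In diameter four, a shortest path between vertices not joined by bridges alone has at
most three bridges, so one of the colors `0` and `1` occurs on at most one of them; all other
non-bridges get color `2`. If `h(G) ≤ 1`, no bridge has color `1` and a single switch is enough.
-/

section EdgeCount

variable {V : Type*} {G : SimpleGraph V} {S T : Set (Sym2 V)} {u v w : V}

open Classical in
/-- The number of edges of the walk `p`, with multiplicity, that belong to `S`. -/
noncomputable def edgeCount (S : Set (Sym2 V)) (p : G.Walk u v) : ℕ :=
  p.edges.countP (· ∈ S)

theorem edgeCount_append (S : Set (Sym2 V)) (p : G.Walk u v) (q : G.Walk v w) :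
    edgeCount S (p.append q) = edgeCount S p + edgeCount S q := by
  simp only [edgeCount, Walk.edges_append, List.countP_append]

theorem edgeCount_reverse (S : Set (Sym2 V)) (p : G.Walk u v) :
    edgeCount S p.reverse = edgeCount S p := by
  simp only [edgeCount, Walk.edges_reverse, List.countP_reverse]

theorem edgeCount_map {V' : Type*} {H : SimpleGraph V'} (f : H →g G) (S : Set (Sym2 V))
    {x y : V'} (p : H.Walk x y) : edgeCount S (p.map f) = edgeCount (Sym2.map f ⁻¹' S) p := by
  simp only [edgeCount, Walk.edges_map, List.countP_map]
  rfl

theorem edgeCount_eq_zero {p : G.Walk u v} : edgeCount S p = 0 ↔ ∀ e ∈ p.edges, e ∉ S := by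
  simp [edgeCount, List.countP_eq_zero]

theorem edgeCount_eq_length {p : G.Walk u v} :
    edgeCount S p = p.length ↔ ∀ e ∈ p.edges, e ∈ S := by
  simp [edgeCount, ← Walk.length_edges, List.countP_eq_length]

theorem edgeCount_le_length (S : Set (Sym2 V)) (p : G.Walk u v) : edgeCount S p ≤ p.length :=
  p.length_edges ▸ List.countP_le_length

theorem edgeCount_mono (hST : S ⊆ T) (p : G.Walk u v) : edgeCount S p ≤ edgeCount T p :=
  List.countP_mono_left fun _ _ he => by simpa using hST (by simpa using he)

theorem edgeCount_congr {p : G.Walk u v} (h : ∀ e ∈ p.edges, e ∈ S ↔ e ∈ T) :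
    edgeCount S p = edgeCount T p :=
  List.countP_congr fun e he => by simpa using h e he

theorem edgeCount_union_of_disjoint (hST : Disjoint S T) (p : G.Walk u v) :
    edgeCount (S ∪ T) p = edgeCount S p + edgeCount T p := by
  unfold edgeCount
  induction p.edges with
  | nil => rfl
  | cons e l ih =>
    have : e ∈ S → e ∉ T := fun h => Set.disjoint_left.1 hST h
    grind

theorem edgeCount_singleton_eq_one {p : G.Walk u v} (hp : p.IsTrail) {e : Sym2 V}
    (he : e ∈ p.edges) : edgeCount {e} p = 1 := by
  classical
  rw [← List.count_eq_one_of_mem hp.edges_nodup he, List.count]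
  exact List.countP_congr fun _ _ => by simp

end EdgeCount

section Bridges

variable {V : Type*} {G : SimpleGraph V} {u v w : V}

theorem bridgeGraph_adj : (bridgeGraph G).Adj u v ↔ G.IsBridge s(u, v) ∧ u ≠ v := by
  simp [bridgeGraph]

theorem mem_edgeSet_bridgeGraph {e : Sym2 V} : e ∈ (bridgeGraph G).edgeSet ↔ G.IsBridge e := by
  cases e with | _ x y
  refine bridgeGraph_adj.trans (and_iff_left_of_imp ?_)
  rintro h (rfl : x = y)
  exact h (Reachable.refl x)

theorem bridgeGraph_le (hconn : G.Connected) : bridgeGraph G ≤ G := fun u v h =>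
  (bridgeGraph_adj.1 h).1.reachable_iff_adj.1 (hconn.preconnected u v)

theorem eq_of_forall_mem_edges_isBridge {p q : G.Walk u v} (hp : p.IsPath) (hq : q.IsPath)
    (hbr : ∀ e ∈ q.edges, G.IsBridge e) : p = q := by
  by_contra hne
  obtain ⟨x, y, p', q', hp', hq', hcycle⟩ := hp.exists_isCycle_of_ne hq hne
  cases q' with
  | nil =>
    have hp'path := Walk.isPath_of_isSubwalk hp' hp
    rw [(Walk.isPath_iff_nil.1 hp'path).eq_nil] at hcycle
    exact hcycle.not_nil Walk.Nil.nil
  | @cons _ z _ h q' =>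
    have hmem : s(x, z) ∈ (Walk.cons h q').edges := by simp
    exact (hbr _ (hq'.edges_subset hmem)).notMem_edges_of_isCycle hcycle (by simp)

theorem mem_edges_of_isBridge {e : Sym2 V} (he : G.IsBridge e) {p : G.Walk u v}
    (hp : p.IsTrail) (hep : e ∈ p.edges) (q : G.Walk u v) : e ∈ q.edges := by
  induction p with
  | nil => simp at hep
  | @cons u w v h p ih =>
    rw [Walk.isTrail_cons] at hp
    rw [Walk.edges_cons, List.mem_cons] at hep
    rcases hep with rfl | hep
    · have := isBridge_iff_forall_walk_mem_edges.1 he (q.append p.reverse)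
      rw [Walk.edges_append, List.mem_append, Walk.edges_reverse, List.mem_reverse] at this
      exact this.resolve_right hp.2
    · have := ih hp.1 hep (Walk.cons h.symm q)
      rw [Walk.edges_cons, List.mem_cons] at this
      refine this.resolve_left ?_
      rintro rfl
      exact hp.2 (Sym2.eq_swap ▸ hep)

theorem edgeCount_eq_of_forall_isBridge {B : Set (Sym2 V)} (hB : ∀ e ∈ B, G.IsBridge e)
    {p q : G.Walk u v} (hp : p.IsPath) (hq : q.IsPath) : edgeCount B p = edgeCount B q := by
  classical
  unfold edgeCount
  rw [List.countP_eq_length_filter, List.countP_eq_length_filter]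
  refine ((List.perm_ext_iff_of_nodup (hp.isTrail.edges_nodup.filter _)
    (hq.isTrail.edges_nodup.filter _)).2 fun e => ?_).length_eq
  simp only [List.mem_filter, decide_eq_true_eq]
  exact and_congr_left fun he => ⟨fun h => mem_edges_of_isBridge (hB e he) hp.isTrail h q,
    fun h => mem_edges_of_isBridge (hB e he) hq.isTrail h p⟩

theorem eq_of_reachable_bridgeGraph (hconn : G.Connected)
    (huv : (bridgeGraph G).Reachable u v) {p q : G.Walk u v} (hp : p.IsPath) (hq : q.IsPath) :
    p = q := by
  obtain ⟨b, hb⟩ := huv.exists_isPath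
  have hb' := (Walk.isPath_mapLe (bridgeGraph_le hconn)).2 hb
  have hbr : ∀ e ∈ (b.mapLe (bridgeGraph_le hconn)).edges, G.IsBridge e := fun e he =>
    mem_edgeSet_bridgeGraph.1 (b.edges_subset_edgeSet (by rwa [Walk.edges_mapLe_eq_edges] at he))
  rw [eq_of_forall_mem_edges_isBridge hp hb' hbr, eq_of_forall_mem_edges_isBridge hq hb' hbr]

theorem exists_not_isBridge_mem_edges (huv : ¬ (bridgeGraph G).Reachable u v)
    (p : G.Walk u v) : ∃ e ∈ p.edges, ¬ G.IsBridge e := by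
  by_contra! hbr
  exact huv ⟨p.transfer _ fun e he => mem_edgeSet_bridgeGraph.2 (hbr e he)⟩

theorem exists_isPath_to_first_mem {W : Set V} (p : G.Walk v w) (hw : w ∈ W) :
    ∃ q ∈ W, ∃ p' : G.Walk v q, p'.IsPath ∧ p'.edges ⊆ p.edges ∧
      ∀ z ∈ p'.support, z ∈ W → z = q := by
  classical
  obtain ⟨q, hqs, hqp, hfirst⟩ :=
    Walk.exists_mem_support_mem_erase_mem_support_takeUntil_eq_empty (p := p)
      {z ∈ p.support.toFinset | z ∈ W} ⟨w, by simp [hw]⟩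
  refine ⟨q, (Finset.mem_filter.1 hqs).2, (p.takeUntil q hqp).bypass, Walk.bypass_isPath _,
    List.Subset.trans (Walk.edges_bypass_subset_edges _) (p.edges_takeUntil_subset_edges hqp),
    fun z hz hzW => ?_⟩
  by_contra hzq
  have hz' := Walk.support_bypass_subset_support _ hz
  have hzp := p.support_takeUntil_subset_support hqp hz'
  refine Finset.eq_empty_iff_forall_notMem.1 hfirst z ?_
  simp only [Finset.mem_filter, Finset.mem_erase, List.mem_toFinset]
  exact ⟨⟨hzq, hzp, hzW⟩, hz'⟩

theorem exists_isPath_of_not_isBridge {W : Set V} (hw : w ∈ W) (hbr : ¬ G.IsBridge s(w, v)) :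
    ∃ q ∈ W, ∃ p : G.Walk v q, p.IsPath ∧ s(w, v) ∉ p.edges ∧ ∀ z ∈ p.support, z ∈ W → z = q := by
  rw [isBridge_iff_forall_walk_mem_edges, not_forall] at hbr
  obtain ⟨r, hr⟩ := hbr
  obtain ⟨q, hq, p, hp, hpr, hpW⟩ := exists_isPath_to_first_mem r.reverse hw
  exact ⟨q, hq, p, hp, fun h => hr (by simpa using hpr h), hpW⟩

end Bridges

section Switches

variable {V : Type*} {G : SimpleGraph V} {F F' : Set (Sym2 V)} {A B W W' : Set V} {x y z w : V}
  {m n : ℕ}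

theorem start_notMem_tail_support {p : G.Walk x y} (hp : p.IsPath) : x ∉ p.support.tail := by
  have := hp.support_nodup
  rw [← Walk.cons_tail_support, List.nodup_cons] at this
  exact this.1

/-- Some path of `G` from `x` to `y` inside `W` has exactly `n` edges in `F`. -/
def HasPathIn (G : SimpleGraph V) (F : Set (Sym2 V)) (W : Set V) (n : ℕ) (x y : V) : Prop :=
  ∃ p : G.Walk x y, p.IsPath ∧ (∀ z ∈ p.support, z ∈ W) ∧ edgeCount F p = n

namespace HasPathIn

theorem refl (hx : x ∈ W) : HasPathIn G F W 0 x x :=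
  ⟨Walk.nil, Walk.IsPath.nil, by simpa using hx, edgeCount_eq_zero.2 (by simp)⟩

theorem symm (h : HasPathIn G F W n x y) : HasPathIn G F W n y x := by
  obtain ⟨p, hp, hpW, hn⟩ := h
  exact ⟨p.reverse, hp.reverse, by simpa using hpW, (edgeCount_reverse F p).trans hn⟩

theorem mono (h : HasPathIn G F W n x y) (hW : W ⊆ W') : HasPathIn G F W' n x y := by
  obtain ⟨p, hp, hpW, hn⟩ := h
  exact ⟨p, hp, fun z hz => hW (hpW z hz), hn⟩

theorem congr (h : HasPathIn G F W n x y) (hF : ∀ e ∈ G.edgeSet, e ∈ W.sym2 → (e ∈ F ↔ e ∈ F')) :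
    HasPathIn G F' W n x y := by
  obtain ⟨p, hp, hpW, rfl⟩ := h
  exact ⟨p, hp, hpW, edgeCount_congr fun e he => (hF e (p.edges_subset_edgeSet he) <|
    Set.mem_sym2_iff_subset.2 fun z hz => hpW z (p.mem_support_of_mem_edges he hz)).symm⟩

theorem trans (h₁ : HasPathIn G F A m x y) (h₂ : HasPathIn G F B n y z) (hAB : A ∩ B ⊆ {y}) :
    HasPathIn G F (A ∪ B) (m + n) x z := by
  obtain ⟨p, hp, hpA, rfl⟩ := h₁
  obtain ⟨q, hq, hqB, rfl⟩ := h₂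
  refine ⟨p.append q, ?_, fun t ht => ?_, edgeCount_append F p q⟩
  · rw [Walk.isPath_def, Walk.support_append, List.nodup_append']
    refine ⟨hp.support_nodup, hq.support_nodup.tail, fun t ht ht' => ?_⟩
    have hty : t = y := hAB ⟨hpA t ht, hqB t (List.mem_of_mem_tail ht')⟩
    exact start_notMem_tail_support hq (hty ▸ ht')
  · exact ((Walk.mem_support_append_iff _ _).1 ht).imp (hpA t) (hqB t)

end HasPathIn

/-- Inside `W`, the vertices `x` and `y` are joined by a path without edges of `F` and, unless
bridges alone join them, also by a path with exactly one edge of `F`. -/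
def Switches (G : SimpleGraph V) (F : Set (Sym2 V)) (W : Set V) (x y : V) : Prop :=
  HasPathIn G F W 0 x y ∧ (¬ (bridgeGraph G).Reachable x y → HasPathIn G F W 1 x y)

namespace Switches

theorem refl (hx : x ∈ W) : Switches G F W x x :=
  ⟨.refl hx, fun h => (h (Reachable.refl x)).elim⟩

theorem symm (h : Switches G F W x y) : Switches G F W y x :=
  ⟨h.1.symm, fun hyx => (h.2 fun hxy => hyx hxy.symm).symm⟩

theorem mono (h : Switches G F W x y) (hW : W ⊆ W') : Switches G F W' x y :=
  ⟨h.1.mono hW, fun hxy => (h.2 hxy).mono hW⟩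

theorem congr (h : Switches G F W x y) (hF : ∀ e ∈ G.edgeSet, e ∈ W.sym2 → (e ∈ F ↔ e ∈ F')) :
    Switches G F' W x y :=
  ⟨h.1.congr hF, fun hxy => (h.2 hxy).congr hF⟩

theorem trans (h₁ : Switches G F A x w) (h₂ : Switches G F B w y) (hAB : A ∩ B ⊆ {w}) :
    Switches G F (A ∪ B) x y := by
  refine ⟨h₁.1.trans h₂.1 hAB, fun hxy => ?_⟩
  by_cases hxw : (bridgeGraph G).Reachable x w
  · exact h₁.1.trans (h₂.2 fun hwy => hxy (hxw.trans hwy)) hAB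
  · exact (h₁.2 hxw).trans h₂.1 hAB

end Switches

theorem switches_of_isCycle {C : G.Walk w w} (hC : C.IsCycle) (hF : edgeCount F C = 1)
    (hx : x ∈ C.support) (hy : y ∈ C.support) : Switches G F {z | z ∈ C.support} x y := by
  classical
  rcases eq_or_ne x y with rfl | hxy
  · exact .refl hx
  have hmem : ∀ {z}, z ∈ (C.rotate x hx).support → z ∈ C.support :=
    (C.mem_support_rotate_iff x hx).1
  have hy' : y ∈ (C.rotate x hx).support := (C.mem_support_rotate_iff x hx).2 hy
  have hD := hC.rotate hx
  have hDF : edgeCount F (C.rotate x hx) = 1 := (C.rotate_edges x hx).perm.countP_eq _ |>.trans hF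
  set p := (C.rotate x hx).takeUntil y hy'
  set q := (C.rotate x hx).dropUntil y hy'
  have hpq : p.append q = C.rotate x hx := Walk.take_spec _ hy'
  have hp : HasPathIn G F {z | z ∈ C.support} (edgeCount F p) x y :=
    ⟨p, hD.isPath_takeUntil hy',
      fun z hz => hmem (Walk.support_takeUntil_subset_support _ _ hz), rfl⟩
  have hq : HasPathIn G F {z | z ∈ C.support} (edgeCount F q) x y := by
    refine HasPathIn.symm ⟨q, ?_,
      fun z hz => hmem (Walk.support_dropUntil_subset_support _ _ hz), rfl⟩
    exact Walk.IsCycle.isPath_of_append_right (Walk.not_nil_of_ne hxy) (hpq.symm ▸ hD)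
  have hsum : edgeCount F p + edgeCount F q = 1 := by rw [← edgeCount_append, hpq, hDF]
  rcases Nat.add_eq_one_iff.1 hsum with ⟨hp0, hq1⟩ | ⟨hp1, hq0⟩
  · exact ⟨hp0 ▸ hp, fun _ => hq1 ▸ hq⟩
  · exact ⟨hq0 ▸ hq, fun _ => hp1 ▸ hp⟩

theorem sym2_mono (hW : W ⊆ W') : W.sym2 ⊆ W'.sym2 := fun _ he =>
  Set.mem_sym2_iff_subset.2 ((Set.mem_sym2_iff_subset.1 he).trans hW)

theorem notMem_sym2_of_inter_subset {e : Sym2 V} (he : e ∈ G.edgeSet)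
    (hAB : A ∩ B ⊆ {w}) (heA : e ∈ A.sym2) : e ∉ B.sym2 := by
  cases e with | _ x y
  rintro heB
  rw [Set.mk_mem_sym2_iff] at heA heB
  exact G.ne_of_adj he ((hAB ⟨heA.1, heB.1⟩).trans (hAB ⟨heA.2, heB.2⟩).symm)

/-- `F` is a set of non-bridges inside `W` that can be switched on or off within `W`: any two
vertices of `W` are joined in `W` by a path avoiding `F` and, unless bridges alone join them, by
a path using `F` exactly once. -/
structure IsSwitchOn (G : SimpleGraph V) (F : Set (Sym2 V)) (W : Set V) : Prop where
  mem_edgeSet : ∀ e ∈ F, e ∈ G.edgeSet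
  mem_sym2 : ∀ e ∈ F, e ∈ W.sym2
  not_isBridge : ∀ e ∈ F, ¬ G.IsBridge e
  switches : ∀ x ∈ W, ∀ y ∈ W, Switches G F W x y

namespace IsSwitchOn

theorem singleton (v : V) : IsSwitchOn G ∅ {v} where
  mem_edgeSet := by simp
  mem_sym2 := by simp
  not_isBridge := by simp
  switches := by
    rintro x rfl y rfl
    exact .refl rfl

theorem pair (hadj : G.Adj x y) (hbr : G.IsBridge s(x, y)) : IsSwitchOn G ∅ {x, y} where
  mem_edgeSet := by simp
  mem_sym2 := by simp
  not_isBridge := by simp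
  switches := by
    have hxy : Switches G ∅ {x, y} x y :=
      ⟨⟨hadj.toWalk, .of_adj hadj, by simp [Adj.toWalk], edgeCount_eq_zero.2 (by simp)⟩,
        fun h => (h (bridgeGraph_adj.2 ⟨hbr, hadj.ne⟩).reachable).elim⟩
    rintro a (rfl | rfl) b (rfl | rfl)
    · exact .refl (Or.inl rfl)
    · exact hxy
    · exact hxy.symm
    · exact .refl (Or.inr rfl)

theorem support_of_isCycle {C : G.Walk w w} (hC : C.IsCycle) {e : Sym2 V} (he : e ∈ C.edges) :
    IsSwitchOn G {e} {z | z ∈ C.support} where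
  mem_edgeSet := by
    rintro _ rfl
    exact C.edges_subset_edgeSet he
  mem_sym2 := by
    rintro _ rfl
    exact Set.mem_sym2_iff_subset.2 fun _ hz => C.mem_support_of_mem_edges he hz
  not_isBridge := by
    rintro _ rfl hbr
    exact hbr.notMem_edges_of_isCycle hC he
  switches _ hx _ hy :=
    switches_of_isCycle hC (edgeCount_singleton_eq_one hC.isTrail he) hx hy

theorem union {F₁ F₂ : Set (Sym2 V)} (h₁ : IsSwitchOn G F₁ A) (h₂ : IsSwitchOn G F₂ B)
    (hAB : A ∩ B = {w}) : IsSwitchOn G (F₁ ∪ F₂) (A ∪ B) where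
  mem_edgeSet e he := he.elim (h₁.mem_edgeSet e) (h₂.mem_edgeSet e)
  mem_sym2 e he := he.elim (fun he => sym2_mono Set.subset_union_left (h₁.mem_sym2 e he))
    fun he => sym2_mono Set.subset_union_right (h₂.mem_sym2 e he)
  not_isBridge e he := he.elim (h₁.not_isBridge e) (h₂.not_isBridge e)
  switches := by
    obtain ⟨hwA, hwB⟩ : w ∈ A ∩ B := hAB ▸ rfl
    have hA : ∀ x ∈ A, ∀ y ∈ A, Switches G (F₁ ∪ F₂) A x y := fun x hx y hy =>
      (h₁.switches x hx y hy).congr fun e he heA =>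
        (or_iff_left fun he₂ =>
          notMem_sym2_of_inter_subset he hAB.subset heA (h₂.mem_sym2 e he₂)).symm
    have hB : ∀ x ∈ B, ∀ y ∈ B, Switches G (F₁ ∪ F₂) B x y := fun x hx y hy =>
      (h₂.switches x hx y hy).congr fun e he heB =>
        (or_iff_right fun he₁ =>
          notMem_sym2_of_inter_subset he hAB.subset (h₁.mem_sym2 e he₁) heB).symm
    rintro x (hx | hx) y (hy | hy)
    · exact (hA x hx y hy).mono Set.subset_union_left
    · exact (hA x hx w hwA).trans (hB w hwB y hy) hAB.subset
    · exact ((hA y hy w hwA).trans (hB w hwB x hx) hAB.subset).symm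
    · exact (hB x hx y hy).mono Set.subset_union_right

end IsSwitchOn

/-- `E` is an ear of `W`: a path with at least two edges and both ends in `W` whose inner vertices
lie outside `W`. -/
structure IsEar (W : Set V) (E : G.Walk x y) : Prop where
  isPath : E.IsPath
  left_mem : x ∈ W
  right_mem : y ∈ W
  eq_or_eq : ∀ z ∈ E.support, z ∈ W → z = x ∨ z = y
  one_lt_length : 1 < E.length

namespace IsEar

variable {E : G.Walk x y}

theorem reverse (hE : IsEar W E) : IsEar W E.reverse where
  isPath := hE.isPath.reverse
  left_mem := hE.right_mem
  right_mem := hE.left_mem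
  eq_or_eq z hz hzW := (hE.eq_or_eq z (by simpa using hz) hzW).symm
  one_lt_length := E.length_reverse.symm ▸ hE.one_lt_length

theorem notMem_sym2 (hE : IsEar W E) {e : Sym2 V} (he : e ∈ E.edges) : e ∉ W.sym2 := by
  cases e with | _ a b
  rintro ⟨ha, hb⟩
  have hab : s(a, b) = s(x, y) := by
    have := hE.eq_or_eq a (E.fst_mem_support_of_mem_edges he) ha
    have := hE.eq_or_eq b (E.snd_mem_support_of_mem_edges he) hb
    have := (E.adj_of_mem_edges he).ne
    grind
  exact hE.one_lt_length.ne' (hE.isPath.length_eq_one_of_mem_edges (hab ▸ he))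

theorem not_reachable_bridgeGraph (hconn : G.Connected) (hE : IsEar W E)
    (h : HasPathIn G F W n x y) : ¬ (bridgeGraph G).Reachable x y := by
  intro hxy
  obtain ⟨p, hp, hpW, -⟩ := h
  obtain rfl := eq_of_reachable_bridgeGraph hconn hxy hE.isPath hp
  obtain ⟨e, he⟩ := List.exists_mem_of_length_pos (E.length_edges.symm ▸ hE.one_lt_length.pos)
  exact hE.notMem_sym2 he <|
    Set.mem_sym2_iff_subset.2 fun z hz => hpW z (E.mem_support_of_mem_edges he hz)

theorem isCycle_append (hE : IsEar W E) {p : G.Walk y x} (hp : p.IsPath)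
    (hpW : ∀ z ∈ p.support, z ∈ W) : (E.append p).IsCycle := by
  refine hE.isPath.isCycle_append hp (fun z hz hz' => ?_) (Or.inl hE.one_lt_length)
  rcases hE.eq_or_eq z (List.mem_of_mem_tail hz) (hpW z (List.mem_of_mem_tail hz')) with rfl | rfl
  · exact start_notMem_tail_support hE.isPath hz
  · exact start_notMem_tail_support hp hz'

theorem hasPathIn (hE : IsEar W E) (hF : edgeCount F E = 0) (h : HasPathIn G F W n z x)
    (hw : w ∈ E.support) (hwy : w ≠ y) : HasPathIn G F (W ∪ {t | t ∈ E.support}) n z w := by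
  classical
  have hsub := E.support_takeUntil_subset_support hw
  have hxw : HasPathIn G F {t | t ∈ (E.takeUntil w hw).support} 0 x w :=
    ⟨_, hE.isPath.takeUntil hw, fun _ ht => ht, edgeCount_eq_zero.2 fun e he =>
      edgeCount_eq_zero.1 hF e (E.edges_takeUntil_subset_edges hw he)⟩
  refine (h.trans hxw ?_).mono (Set.union_subset_union_right W hsub)
  rintro t ⟨htW, ht⟩
  refine (hE.eq_or_eq t (hsub ht) htW).resolve_right ?_
  rintro rfl
  exact Walk.endpoint_notMem_support_takeUntil hE.isPath hw hwy.symm ht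

end IsEar

namespace IsSwitchOn

theorem union_ear (hconn : G.Connected) (h : IsSwitchOn G F W) {E : G.Walk x y}
    (hE : IsEar W E) : IsSwitchOn G F (W ∪ {t | t ∈ E.support}) where
  mem_edgeSet := h.mem_edgeSet
  mem_sym2 e he := sym2_mono Set.subset_union_left (h.mem_sym2 e he)
  not_isBridge := h.not_isBridge
  switches := by
    have hF : edgeCount F E = 0 :=
      edgeCount_eq_zero.2 fun e he heF => hE.notMem_sym2 he (h.mem_sym2 e heF)
    have hxy := h.switches x hE.left_mem y hE.right_mem
    have hnr := hE.not_reachable_bridgeGraph hconn hxy.1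
    have ear : ∀ a ∈ E.support, ∀ b ∈ E.support, Switches G F (W ∪ {t | t ∈ E.support}) a b := by
      obtain ⟨p, hp, hpW, hpF⟩ := (hxy.2 hnr).symm
      intro a ha b hb
      refine (switches_of_isCycle (hE.isCycle_append hp hpW) (by rw [edgeCount_append, hF, hpF])
        (E.support_subset_support_append_left p ha)
        (E.support_subset_support_append_left p hb)).mono fun z hz => ?_
      exact ((Walk.mem_support_append_iff _ _).1 hz).symm.imp (hpW z) id
    have mixed : ∀ a ∈ W, ∀ b ∈ E.support, Switches G F (W ∪ {t | t ∈ E.support}) a b := by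
      intro a ha b hb
      by_cases hbW : b ∈ W
      · exact (h.switches a ha b hbW).mono Set.subset_union_left
      have hbx : b ≠ x := fun hb => hbW (hb ▸ hE.left_mem)
      have hby : b ≠ y := fun hb => hbW (hb ▸ hE.right_mem)
      have hax := h.switches a ha x hE.left_mem
      refine ⟨hE.hasPathIn hF hax.1 hb hby, fun _ => ?_⟩
      by_cases hr : (bridgeGraph G).Reachable a x
      · have hay := (h.switches a ha y hE.right_mem).2 fun hay => hnr (hr.symm.trans hay)
        simpa using hE.reverse.hasPathIn ((edgeCount_reverse F E).trans hF) hay (by simpa) hbx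
      · exact hE.hasPathIn hF (hax.2 hr) hb hby
    rintro a (ha | ha) b (hb | hb)
    · exact (h.switches a ha b hb).mono Set.subset_union_left
    · exact mixed a ha b hb
    · exact (mixed b hb a ha).symm
    · exact ear a ha b hb

end IsSwitchOn

/-- Two disjoint sets of edges, indexed by `Bool`, each of which is a switch on the vertex set
`carrier`. -/
structure SwitchPair (G : SimpleGraph V) where
  carrier : Set V
  nonempty : carrier.Nonempty
  switch : Bool → Set (Sym2 V)
  isSwitchOn : ∀ i, IsSwitchOn G (switch i) carrier
  disjoint : Disjoint (switch false) (switch true)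

namespace SwitchPair

/-- `P ≤ Q` means that `Q` extends `P`: inside the carrier of `P`, the switches agree. -/
instance : Preorder (SwitchPair G) where
  le P Q := P.carrier ⊆ Q.carrier ∧ ∀ i, Q.switch i ∩ P.carrier.sym2 = P.switch i
  le_refl P := ⟨Set.Subset.rfl, fun i => Set.inter_eq_left.2 ((P.isSwitchOn i).mem_sym2)⟩
  le_trans P Q R hPQ hQR := ⟨hPQ.1.trans hQR.1, fun i => by
    rw [← hPQ.2, ← hQR.2, Set.inter_assoc, Set.inter_eq_right.2 (sym2_mono hPQ.1)]⟩

theorem mem_switch_of_isChain {c : Set (SwitchPair G)} (hc : IsChain (· ≤ ·) c)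
    {P Q : SwitchPair G} (hP : P ∈ c) (hQ : Q ∈ c) {i : Bool} {e : Sym2 V}
    (heP : e ∈ P.switch i) (heQ : e ∈ Q.carrier.sym2) : e ∈ Q.switch i := by
  rcases hc.total hP hQ with hPQ | hQP
  · exact ((hPQ.2 i).symm ▸ heP : e ∈ Q.switch i ∩ P.carrier.sym2).1
  · exact hQP.2 i ▸ ⟨heP, heQ⟩

theorem isSwitchOn_iUnion {c : Set (SwitchPair G)} (hc : IsChain (· ≤ ·) c) (i : Bool) :
    IsSwitchOn G (⋃ P ∈ c, P.switch i) (⋃ P ∈ c, P.carrier) where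
  mem_edgeSet e he := by
    obtain ⟨P, -, heP⟩ := Set.mem_iUnion₂.1 he
    exact (P.isSwitchOn i).mem_edgeSet e heP
  mem_sym2 e he := by
    obtain ⟨P, hP, heP⟩ := Set.mem_iUnion₂.1 he
    exact sym2_mono (Set.subset_biUnion_of_mem hP) ((P.isSwitchOn i).mem_sym2 e heP)
  not_isBridge e he := by
    obtain ⟨P, -, heP⟩ := Set.mem_iUnion₂.1 he
    exact (P.isSwitchOn i).not_isBridge e heP
  switches x hx y hy := by
    obtain ⟨P, hP, hxP⟩ := Set.mem_iUnion₂.1 hx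
    obtain ⟨Q, hQ, hyQ⟩ := Set.mem_iUnion₂.1 hy
    obtain ⟨R, hR, hPR, hQR⟩ := hc.directedOn P hP Q hQ
    refine (((R.isSwitchOn i).switches x (hPR.1 hxP) y (hQR.1 hyQ)).congr fun e _ heR => ?_).mono
      (Set.subset_biUnion_of_mem hR)
    refine ⟨fun he => Set.mem_biUnion hR he, fun he => ?_⟩
    obtain ⟨S, hS, heS⟩ := Set.mem_iUnion₂.1 he
    exact mem_switch_of_isChain hc hS hR heS heR

theorem bddAbove_of_isChain {c : Set (SwitchPair G)} (hc : IsChain (· ≤ ·) c)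
    (hne : c.Nonempty) : BddAbove c := by
  obtain ⟨P₀, hP₀⟩ := hne
  refine ⟨⟨⋃ P ∈ c, P.carrier, P₀.nonempty.mono (Set.subset_biUnion_of_mem hP₀),
    fun i => ⋃ P ∈ c, P.switch i, isSwitchOn_iUnion hc, ?_⟩, fun P hP =>
      ⟨Set.subset_biUnion_of_mem hP, fun i => ?_⟩⟩
  · refine Set.disjoint_left.2 fun e he he' => ?_
    obtain ⟨P, hP, heP⟩ := Set.mem_iUnion₂.1 he
    obtain ⟨Q, hQ, heQ⟩ := Set.mem_iUnion₂.1 he'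
    exact Set.disjoint_left.1 Q.disjoint
      (mem_switch_of_isChain hc hP hQ heP ((Q.isSwitchOn true).mem_sym2 e heQ)) heQ
  · ext e
    refine ⟨fun ⟨he, heP⟩ => ?_, fun he =>
      ⟨Set.mem_biUnion hP he, (P.isSwitchOn i).mem_sym2 e he⟩⟩
    obtain ⟨Q, hQ, heQ⟩ := Set.mem_iUnion₂.1 he
    exact mem_switch_of_isChain hc hQ hP heQ heP

theorem exists_ge_carrier_eq_union (P Q : SwitchPair G) (hPQ : P.carrier ∩ Q.carrier = {w}) :
    ∃ R ≥ P, R.carrier = P.carrier ∪ Q.carrier := by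
  have hdisj : ∀ i j, Disjoint (P.switch i) (Q.switch j) := fun i j =>
    Set.disjoint_left.2 fun e heP heQ => notMem_sym2_of_inter_subset
      ((P.isSwitchOn i).mem_edgeSet e heP) hPQ.subset ((P.isSwitchOn i).mem_sym2 e heP)
      ((Q.isSwitchOn j).mem_sym2 e heQ)
  refine ⟨⟨P.carrier ∪ Q.carrier, P.nonempty.inl, fun i => P.switch i ∪ Q.switch i,
    fun i => (P.isSwitchOn i).union (Q.isSwitchOn i) hPQ, ?_⟩,
    ⟨Set.subset_union_left, fun i => ?_⟩, rfl⟩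
  · rw [Set.disjoint_union_left, Set.disjoint_union_right, Set.disjoint_union_right]
    exact ⟨⟨P.disjoint, hdisj _ _⟩, (hdisj _ _).symm, Q.disjoint⟩
  · ext e
    refine ⟨fun ⟨he, heP⟩ => he.resolve_right fun heQ => ?_, fun he =>
      ⟨Or.inl he, (P.isSwitchOn i).mem_sym2 e he⟩⟩
    exact notMem_sym2_of_inter_subset ((Q.isSwitchOn i).mem_edgeSet e heQ) hPQ.subset heP
      ((Q.isSwitchOn i).mem_sym2 e heQ)

theorem exists_carrier_eq_support {C : G.Walk w w} (hC : C.IsCycle) :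
    ∃ P : SwitchPair G, P.carrier = {z | z ∈ C.support} := by
  obtain ⟨e, e', he, he', hne⟩ : ∃ e e', e ∈ C.edges ∧ e' ∈ C.edges ∧ e ≠ e' := by
    have hlen := C.length_edges ▸ hC.three_le_length
    have hnodup := hC.isTrail.edges_nodup
    match h : C.edges with
    | [] | [_] => simp [h] at hlen
    | e :: e' :: l => exact ⟨e, e', by simp, by simp, by simp_all⟩
  refine ⟨⟨{z | z ∈ C.support}, ⟨w, C.start_mem_support⟩, fun i => {bif i then e else e'},
    fun i => ?_, by simpa using hne.symm⟩, rfl⟩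
  cases i
  · exact .support_of_isCycle hC he'
  · exact .support_of_isCycle hC he

theorem exists_ge_mem_carrier (hconn : G.Connected) (P : SwitchPair G) (hw : w ∈ P.carrier)
    (hx : x ∉ P.carrier) (hadj : G.Adj w x) : ∃ Q ≥ P, x ∈ Q.carrier := by
  by_cases hbr : G.IsBridge s(w, x)
  · let B : SwitchPair G := ⟨{w, x}, ⟨w, Or.inl rfl⟩, fun _ => ∅, fun _ => .pair hadj hbr, by simp⟩
    obtain ⟨Q, hPQ, hQ⟩ := P.exists_ge_carrier_eq_union B (w := w) (by grind)
    exact ⟨Q, hPQ, hQ ▸ Or.inr (Or.inr rfl)⟩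
  obtain ⟨q, hq, p, hp, hwx, hpP⟩ := exists_isPath_of_not_isBridge hw hbr
  rcases eq_or_ne w q with rfl | hwq
  · obtain ⟨C, hC⟩ := exists_carrier_eq_support ((p.cons_isCycle_iff hadj).2 ⟨hp, hwx⟩)
    obtain ⟨Q, hPQ, hQ⟩ := P.exists_ge_carrier_eq_union C (w := w) (by grind [Walk.support_cons])
    exact ⟨Q, hPQ, by simp [hQ, hC]⟩
  · have hear : IsEar P.carrier (Walk.cons hadj p) :=
      { isPath := hp.cons fun h => hwq (hpP w h hw)
        left_mem := hw
        right_mem := hq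
        eq_or_eq := by grind [Walk.support_cons]
        one_lt_length := by
          have hxq : x ≠ q := fun h => hx (h ▸ hq)
          simpa using Walk.not_nil_iff_lt_length.1 (p.not_nil_of_ne hxq) }
    refine ⟨⟨_, P.nonempty.inl, P.switch, fun i => (P.isSwitchOn i).union_ear hconn hear,
      P.disjoint⟩, ⟨Set.subset_union_left, (le_refl P).2⟩, ?_⟩
    simp

theorem exists_carrier_eq_univ (hconn : G.Connected) :
    ∃ P : SwitchPair G, P.carrier = Set.univ := by
  obtain ⟨v⟩ := hconn.nonempty
  have : Nonempty (SwitchPair G) :=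
    ⟨⟨{v}, ⟨v, rfl⟩, fun _ => ∅, fun _ => .singleton v, by simp⟩⟩
  obtain ⟨P, hP⟩ := zorn_le_nonempty fun c hc hne =>
    bddAbove_of_isChain (G := G) (c := c) hc hne
  refine ⟨P, Set.eq_univ_of_forall fun x => by_contra fun hx => ?_⟩
  obtain ⟨w, hw⟩ := P.nonempty
  obtain ⟨p⟩ := hconn.preconnected w x
  obtain ⟨d, -, hd, hd'⟩ := p.exists_boundary_dart P.carrier hw hx
  obtain ⟨Q, hPQ, hQ⟩ := P.exists_ge_mem_carrier hconn hd hd' d.adj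
  exact hd' ((hP hPQ).1 hQ)

end SwitchPair

theorem exists_disjoint_isSwitchOn_univ (hconn : G.Connected) :
    ∃ F : Bool → Set (Sym2 V), (∀ i, IsSwitchOn G (F i) Set.univ) ∧
      Disjoint (F false) (F true) := by
  obtain ⟨P, hP⟩ := SwitchPair.exists_carrier_eq_univ hconn
  exact ⟨P.switch, hP ▸ P.isSwitchOn, P.disjoint⟩

end Switches

section Colorings

variable {V : Type*} {G H : SimpleGraph V} {b c d : Sym2 V → ℕ} {u v : V} {j k m : ℕ}

/-- The coloring `c` makes the pair `u`, `v` conflict-free connected: some path from `u` to `v`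
has exactly one edge of some color. -/
def CFJoined (G : SimpleGraph V) (c : Sym2 V → ℕ) (u v : V) : Prop :=
  ∃ p : G.Walk u v, p.IsPath ∧ ∃ j, edgeCount (c ⁻¹' {j}) p = 1

/-- `G` has a conflict-free connection coloring with the colors `0, …, k - 1`. -/
def CFConnColorable (G : SimpleGraph V) (k : ℕ) : Prop :=
  ∃ c : Sym2 V → ℕ, (∀ e ∈ G.edgeSet, c e < k) ∧ IsCFConnColoring G c

theorem isCFConnColoring_iff : IsCFConnColoring G c ↔ ∀ u v, u ≠ v → CFJoined G c u v := by
  simp [IsCFConnColoring, CFJoined, edgeCount, List.countP_eq_length_filter]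

namespace CFJoined

theorem map {V' : Type*} {H : SimpleGraph V'} (f : H →g G) (hf : Function.Injective f)
    {x y : V'} (h : CFJoined H (c ∘ Sym2.map f) x y) : CFJoined G c (f x) (f y) := by
  obtain ⟨p, hp, j, hj⟩ := h
  exact ⟨p.map f, (Walk.isPath_map_iff_of_injective hf).2 hp, j, (edgeCount_map f _ p).trans hj⟩

theorem mono (hHG : H ≤ G) (h : CFJoined H c u v) : CFJoined G c u v :=
  map (.ofLE hHG) Function.injective_id (by simpa [Sym2.map_id] using h)

theorem congr (h : CFJoined G b u v) (hbc : Set.EqOn b c G.edgeSet) : CFJoined G c u v := by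
  obtain ⟨p, hp, j, hj⟩ := h
  refine ⟨p, hp, j, (edgeCount_congr fun e he => ?_).trans hj⟩
  simp [hbc (p.edges_subset_edgeSet he)]

end CFJoined

theorem cfJoined_of_injective (hc : Function.Injective c) (huv : u ≠ v) (h : G.Reachable u v) :
    CFJoined G c u v := by
  obtain ⟨p, hp⟩ := h.exists_isPath
  obtain ⟨e, he⟩ := List.exists_mem_of_length_pos
    (p.length_edges.symm ▸ Walk.not_nil_iff_lt_length.1 (p.not_nil_of_ne huv))
  refine ⟨p, hp, c e, ?_⟩
  rw [← Set.image_singleton, hc.preimage_image, edgeCount_singleton_eq_one hp.isTrail he]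

theorem exists_cfConnColorable [Finite V] (hconn : G.Connected) : ∃ k, CFConnColorable G k := by
  obtain ⟨k, ⟨f⟩⟩ := Finite.exists_equiv_fin (Sym2 V)
  refine ⟨k, fun e => f e, fun e _ => (f e).2, isCFConnColoring_iff.2 fun u v huv => ?_⟩
  exact cfJoined_of_injective (Fin.val_injective.comp f.injective) huv (hconn.preconnected u v)

namespace CFConnColorable

theorem mono (hk : CFConnColorable G k) (hkm : k ≤ m) : CFConnColorable G m := by
  obtain ⟨c, hc, hcf⟩ := hk
  exact ⟨c, fun e he => (hc e he).trans_le hkm, hcf⟩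

theorem cfConn_le (hk : CFConnColorable G k) : cfConn G ≤ k :=
  Nat.sInf_le hk

theorem cfConnColorable_cfConn (hk : CFConnColorable G k) : CFConnColorable G (cfConn G) :=
  Nat.sInf_mem (s := {k | CFConnColorable G k}) ⟨k, hk⟩

theorem eq_top (hk : CFConnColorable G k) (hk1 : k ≤ 1) : G = ⊤ := by
  obtain ⟨c, hc, hcf⟩ := hk
  refine top_le_iff.1 fun u v huv => ?_
  obtain ⟨p, -, j, hj⟩ := isCFConnColoring_iff.1 hcf u v huv
  have hc0 : ∀ e ∈ p.edges, c e = 0 := fun e he => by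
    have := hc e (p.edges_subset_edgeSet he)
    lia
  have hj0 : j = 0 := by
    by_contra hj0
    have : edgeCount (c ⁻¹' {j}) p = 0 :=
      edgeCount_eq_zero.2 fun e he hej => hj0 (hej.symm.trans (hc0 e he))
    lia
  have hlen : edgeCount (c ⁻¹' {j}) p = p.length :=
    edgeCount_eq_length.2 fun e he => (hc0 e he).trans hj0.symm
  exact p.adj_of_length_eq_one (hlen.symm.trans hj)

theorem two_le_cfConn (hk : CFConnColorable G k) (hG : G ≠ ⊤) : 2 ≤ cfConn G := by
  by_contra! hlt
  exact hG (hk.cfConnColorable_cfConn.eq_top (Nat.le_of_lt_succ hlt))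

theorem induce_supp (hconn : G.Connected) (hk : CFConnColorable G k)
    (C : (bridgeGraph G).ConnectedComponent) :
    CFConnColorable ((bridgeGraph G).induce C.supp) k := by
  obtain ⟨c, hc, hcf⟩ := hk
  let f : (bridgeGraph G).induce C.supp →g G :=
    (Hom.ofLE (bridgeGraph_le hconn)).comp (Embedding.induce C.supp).toHom
  refine ⟨c ∘ Sym2.map f, fun e he => hc _ (f.map_mem_edgeSet he),
    isCFConnColoring_iff.2 fun x y hxy => ?_⟩
  obtain ⟨p, hp, j, hj⟩ := isCFConnColoring_iff.1 hcf x y (Subtype.coe_ne_coe.2 hxy)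
  obtain ⟨q, hq⟩ : ∃ q : ((bridgeGraph G).induce C.supp).Walk x y, q.IsPath :=
    (C.connected_toSimpleGraph.preconnected x y).exists_isPath
  have hqp : q.map f = p := eq_of_reachable_bridgeGraph hconn (ConnectedComponent.exact
    (x.2.trans y.2.symm)) ((Walk.isPath_map_iff_of_injective Subtype.val_injective).2 hq) hp
  have hqj : edgeCount (c ⁻¹' {j}) (q.map f) = edgeCount (c ⁻¹' {j}) p := congrArg _ hqp
  exact ⟨q, hq, j, (edgeCount_map f _ q).symm.trans (hqj.trans hj)⟩

theorem hG_le_cfConn (hconn : G.Connected) (hk : CFConnColorable G k) : hG G ≤ cfConn G := by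
  obtain ⟨v⟩ := hconn.nonempty
  refine csSup_le ⟨_, (bridgeGraph G).connectedComponentMk v, rfl⟩ ?_
  rintro n ⟨C, rfl⟩
  exact (hk.cfConnColorable_cfConn.induce_supp hconn C).cfConn_le

theorem induce_supp_hG (hconn : G.Connected) (hk : CFConnColorable G k)
    (C : (bridgeGraph G).ConnectedComponent) :
    CFConnColorable ((bridgeGraph G).induce C.supp) (hG G) := by
  refine (hk.induce_supp hconn C).cfConnColorable_cfConn.mono (le_csSup ⟨k, ?_⟩ ⟨C, rfl⟩)
  rintro n ⟨C', rfl⟩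
  exact (hk.induce_supp hconn C').cfConn_le

end CFConnColorable

theorem injective_sym2_map_supp : Function.Injective
    fun s : Σ C : H.ConnectedComponent, Sym2 C.supp => s.2.map Subtype.val := by
  rintro ⟨C, e⟩ ⟨D, f⟩ (hef : e.map Subtype.val = f.map Subtype.val)
  obtain ⟨y, -, hxy⟩ := Sym2.mem_map.1 (hef ▸ Sym2.mem_map.2 ⟨_, e.out_fst_mem, rfl⟩)
  obtain rfl : C = D := e.out.1.2.symm.trans ((congrArg _ hxy.symm).trans y.2)
  exact congrArg _ (Sym2.map.injective Subtype.val_injective hef)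

theorem exists_cfJoined_of_reachable
    (hk : ∀ C : H.ConnectedComponent, CFConnColorable (H.induce C.supp) k) :
    ∃ c : Sym2 V → ℕ, (∀ e ∈ H.edgeSet, c e < k) ∧
      ∀ u v, u ≠ v → H.Reachable u v → CFJoined H c u v := by
  choose d hd hdcf using hk
  let c : Sym2 V → ℕ := Function.extend
    (fun s : Σ C : H.ConnectedComponent, Sym2 C.supp => s.2.map Subtype.val)
    (fun s => d s.1 s.2) 0
  have hc : ∀ (C : H.ConnectedComponent) (e : Sym2 C.supp), c (e.map Subtype.val) = d C e :=
    fun C e => injective_sym2_map_supp.extend_apply _ _ ⟨C, e⟩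
  refine ⟨c, fun e he => ?_, fun u v huv hr => ?_⟩
  · cases e with | _ x y
    have hy : y ∈ (H.connectedComponentMk x).supp :=
      ConnectedComponent.sound (Adj.reachable he).symm
    exact (hc _ s(⟨x, rfl⟩, ⟨y, hy⟩)).trans_lt (hd _ _ he)
  · have hv : v ∈ (H.connectedComponentMk u).supp := ConnectedComponent.sound hr.symm
    let x : (H.connectedComponentMk u).supp := ⟨u, rfl⟩
    let y : (H.connectedComponentMk u).supp := ⟨v, hv⟩
    have hxy : x ≠ y := fun h => huv (congrArg Subtype.val h)
    have hcf := isCFConnColoring_iff.1 (hdcf _) x y hxy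
    exact CFJoined.map (x := x) (y := y) (Embedding.induce _).toHom Subtype.val_injective
      (hcf.congr fun e _ => (hc _ e).symm)

open Classical in
/-- The coloring of the edges of `G` by `b` on the bridges and by `d` on the other edges. -/
noncomputable def colorBridges (G : SimpleGraph V) (b d : Sym2 V → ℕ) : Sym2 V → ℕ :=
  {e | G.IsBridge e}.piecewise b d

theorem edgeCount_colorBridges (hd : ∀ e, d e = j → ¬ G.IsBridge e) (p : G.Walk u v) :
    edgeCount (colorBridges G b d ⁻¹' {j}) p =
      edgeCount {e | G.IsBridge e ∧ b e = j} p + edgeCount (d ⁻¹' {j}) p := by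
  have hdisj : Disjoint {e | G.IsBridge e ∧ b e = j} (d ⁻¹' {j}) :=
    Set.disjoint_left.2 fun e he hej => hd e hej he.1
  rw [← edgeCount_union_of_disjoint hdisj]
  congr 1
  ext e
  by_cases he : G.IsBridge e
  · have : d e ≠ j := fun hej => hd e hej he
    simp [colorBridges, he, this]
  · simp [colorBridges, he]

theorem cfJoined_colorBridges (hd : IsSwitchOn G (d ⁻¹' {j}) Set.univ)
    (huv : ¬ (bridgeGraph G).Reachable u v) {p : G.Walk u v} (hp : p.IsPath)
    (hle : edgeCount {e | G.IsBridge e ∧ b e = j} p ≤ 1) :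
    CFJoined G (colorBridges G b d) u v := by
  have hsw := hd.switches u (Set.mem_univ u) v (Set.mem_univ v)
  have key (q : G.Walk u v) (hq : q.IsPath) : edgeCount (colorBridges G b d ⁻¹' {j}) q =
      edgeCount {e | G.IsBridge e ∧ b e = j} p + edgeCount (d ⁻¹' {j}) q := by
    rw [edgeCount_colorBridges hd.not_isBridge, edgeCount_eq_of_forall_isBridge
      (B := {e | G.IsBridge e ∧ b e = j}) (fun e => And.left) hp hq]
  rcases Nat.le_one_iff_eq_zero_or_eq_one.1 hle with h0 | h1
  · obtain ⟨q, hq, -, hqj⟩ := hsw.2 huv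
    exact ⟨q, hq, j, by rw [key q hq, h0, hqj]⟩
  · obtain ⟨q, hq, -, hqj⟩ := hsw.1
    exact ⟨q, hq, j, by rw [key q hq, h1, hqj]⟩

theorem cfConnColorable_of_colorBridges (hconn : G.Connected) (hd : ∀ e, d e < m) (hkm : k ≤ m)
    (hk : ∀ C : (bridgeGraph G).ConnectedComponent,
      CFConnColorable ((bridgeGraph G).induce C.supp) k)
    (hjoin : ∀ b : Sym2 V → ℕ, (∀ e, G.IsBridge e → b e < k) → ∀ u v,
      ¬ (bridgeGraph G).Reachable u v → CFJoined G (colorBridges G b d) u v) :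
    CFConnColorable G m := by
  obtain ⟨b, hbk, hb⟩ := exists_cfJoined_of_reachable hk
  simp only [mem_edgeSet_bridgeGraph] at hbk
  refine ⟨colorBridges G b d, fun e _ => ?_, isCFConnColoring_iff.2 fun u v huv => ?_⟩
  · by_cases he : G.IsBridge e
    · simpa [colorBridges, he] using (hbk e he).trans_le hkm
    · simpa [colorBridges, he] using hd e
  · by_cases hr : (bridgeGraph G).Reachable u v
    · refine ((hb u v huv hr).congr fun e he => ?_).mono (bridgeGraph_le hconn)
      simp [colorBridges, mem_edgeSet_bridgeGraph.1 he]
    · exact hjoin b hbk u v hr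

theorem cfConnColorable_two (hconn : G.Connected) (hk1 : k ≤ 1)
    (hk : ∀ C : (bridgeGraph G).ConnectedComponent,
      CFConnColorable ((bridgeGraph G).induce C.supp) k) :
    CFConnColorable G 2 := by
  classical
  obtain ⟨F, hF, -⟩ := exists_disjoint_isSwitchOn_univ hconn
  let d : Sym2 V → ℕ := fun e => if e ∈ F true then 1 else 0
  have hd : d ⁻¹' {1} = F true := by
    ext e
    simp [d]
  refine cfConnColorable_of_colorBridges (d := d) hconn (by grind) (by lia) hk
    fun b hb u v huv => ?_
  obtain ⟨p, hp⟩ := (hconn.preconnected u v).exists_isPath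
  have hb1 : edgeCount {e | G.IsBridge e ∧ b e = 1} p = 0 :=
    edgeCount_eq_zero.2 fun e _ ⟨he, he1⟩ => by grind
  exact cfJoined_colorBridges (hd ▸ hF true) huv hp (by lia)

theorem edgeCount_isBridge_lt_length (huv : ¬ (bridgeGraph G).Reachable u v) (p : G.Walk u v) :
    edgeCount {e | G.IsBridge e} p < p.length := by
  refine (edgeCount_le_length _ p).lt_of_ne fun heq => ?_
  obtain ⟨e, he, hbr⟩ := exists_not_isBridge_mem_edges huv p
  exact hbr (edgeCount_eq_length.1 heq e he)

theorem cfConnColorable_of_dist_le_four (hconn : G.Connected) (hdist : ∀ u v, G.dist u v ≤ 4)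
    (hk3 : 3 ≤ k)
    (hk : ∀ C : (bridgeGraph G).ConnectedComponent,
      CFConnColorable ((bridgeGraph G).induce C.supp) k) :
    CFConnColorable G k := by
  classical
  obtain ⟨F, hF, hdisj⟩ := exists_disjoint_isSwitchOn_univ hconn
  let d : Sym2 V → ℕ := fun e => if e ∈ F false then 0 else if e ∈ F true then 1 else 2
  have hd0 : d ⁻¹' {0} = F false := by
    ext e
    simp only [d, Set.mem_preimage, Set.mem_singleton_iff]
    grind
  have hd1 : d ⁻¹' {1} = F true := by
    ext e
    have : e ∈ F false → e ∉ F true := fun h => Set.disjoint_left.1 hdisj h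
    simp only [d, Set.mem_preimage, Set.mem_singleton_iff]
    grind
  refine cfConnColorable_of_colorBridges (d := d) hconn (by grind) le_rfl hk
    fun b _ u v huv => ?_
  obtain ⟨p, hp, hlen⟩ := hconn.exists_path_of_dist u v
  let B : ℕ → Set (Sym2 V) := fun j => {e | G.IsBridge e ∧ b e = j}
  have hB : edgeCount (B 0) p + edgeCount (B 1) p ≤ 3 := by
    have hB01 : Disjoint (B 0) (B 1) :=
      Set.disjoint_left.2 fun e he he' => zero_ne_one (he.2.symm.trans he'.2)
    rw [← edgeCount_union_of_disjoint hB01]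
    have := edgeCount_mono (Set.union_subset (fun e => And.left) (fun e => And.left) :
      B 0 ∪ B 1 ⊆ {e | G.IsBridge e}) p
    have := edgeCount_isBridge_lt_length huv p
    have := hdist u v
    lia
  rcases (by lia : edgeCount (B 0) p ≤ 1 ∨ edgeCount (B 1) p ≤ 1) with h | h
  · exact cfJoined_colorBridges (hd0 ▸ hF false) huv hp h
  · exact cfJoined_colorBridges (hd1 ▸ hF true) huv hp h

end Colorings

theorem cfConn_of_diam_four_general {V : Type*} (G : SimpleGraph V) (hconn : G.Connected) {k : ℕ}
    (hk : CFConnColorable G k) :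
    ((∀ u v, G.dist u v ≤ 4) → 3 ≤ hG G → cfConn G = hG G) ∧
      (G ≠ ⊤ → hG G ≤ 1 → cfConn G = 2) := by
  have hcomp := hk.induce_supp_hG hconn
  refine ⟨fun hdist h3 => le_antisymm ?_ (hk.hG_le_cfConn hconn),
    fun htop h1 => le_antisymm ?_ (hk.two_le_cfConn htop)⟩
  · exact (cfConnColorable_of_dist_le_four hconn hdist h3 hcomp).cfConn_le
  · exact (cfConnColorable_two hconn h1 hcomp).cfConn_le

/-- For a connected graph `G` of diameter `4`: if `h(G) ≥ 3` then `cfc(G) = h(G)`,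
and if `h(G) ≤ 1` then `cfc(G) = 2`. -/
theorem cfConn_of_diam_four {V : Type*} [Fintype V] (G : SimpleGraph V)
    (hconn : G.Connected) (hdiam : G.diam = 4) :
    (3 ≤ hG G → cfConn G = hG G) ∧ (hG G ≤ 1 → cfConn G = 2) := by
  obtain ⟨k, hk⟩ := exists_cfConnColorable hconn
  have hdiam0 : G.diam ≠ 0 := by lia
  have := nontrivial_of_diam_ne_zero hdiam0
  have hdist : ∀ u v, G.dist u v ≤ 4 := fun u v =>
    hdiam ▸ dist_le_diam (ediam_ne_top_of_diam_ne_zero hdiam0)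
  have htop : G ≠ ⊤ := by
    rw [Ne, ← diam_eq_one]
    lia
  exact (cfConn_of_diam_four_general G hconn hk).imp (· hdist) (· htop)
end
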